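/- arXiv:1808.06513 — 4 statements merged into one kernel-verified Lean document; each statement's English description precedes it below -/
import Mathlib

section
/- Let n ≥ 1 and let E ⊆ ℍⁿ be precisely monotone with E ≠ ∅ and E ≠ ℍⁿ. Then there exist a nonzero ν ∈ ℝ^{2n+1} and c ∈ ℝ such that, setting Ω = {v ∈ ℝ^{2n+1} : ⟨v,ν⟩ > c}, one has Ω ⊆ E ⊆ closure(Ω). -/
/- The Heisenberg group `ℍⁿ = ℂⁿ × ℝ` with law
`(z,t)·(ζ,τ) = (z+ζ, t+τ+2 Im(Σ_j z_j conj(ζ_j)))`. -/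

noncomputable section

/-- Group law of `ℍⁿ`. -/
def heisMul {n : ℕ} (p q : (Fin n → ℂ) × ℝ) : (Fin n → ℂ) × ℝ :=
  (p.1 + q.1, p.2 + q.2 + 2 * (∑ j, p.1 j * (starRingEnd ℂ) (q.1 j)).im)

/-- Horizontal convexity in `ℍⁿ`. -/
def HeisConvex {n : ℕ} (C : Set ((Fin n → ℂ) × ℝ)) : Prop :=
  ∀ p : (Fin n → ℂ) × ℝ, ∀ ζ : Fin n → ℂ, p ∈ C → heisMul p (ζ, 0) ∈ C →
    ∀ s : ℝ, 0 ≤ s → s ≤ 1 → heisMul p (s • ζ, 0) ∈ C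

/-!
In `ℍ¹`, an open horizontal segment from an interior point to a closure point of a horizontally
convex set consists of interior points. Hence the frontier of a precisely monotone set contains the
whole line through any two of its horizontally related points, and it contains a horizontal line
through each of its points. Three such lines in general position would force the frontier to be the
whole space, which is impossible because a nonempty precisely monotone set has interior; so the
frontier lies in a plane, and the set is a half-space up to its boundary.

Any two points of `ℍⁿ` lie in a common affine copy of `ℍ¹`, so for a precisely monotone `E` the
interiors of `E` and of its complement are convex. They are nonempty: the slices of `E` along the
complex coordinates through a point of `E` have interior, points of equal height in different slices
are horizontally related, and averages of such points fill an open set. A hyperplane separating the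
two interiors is the boundary of the half-space.
-/

open Set Filter Topology

namespace Heisenberg

/-- The underlying space of the first Heisenberg group, whose group law is given by `planeForm`. -/
local notation "ℍ₁" => (ℝ × ℝ) × ℝ

section Horizontal

variable {V : Type*} [AddCommGroup V] [Module ℝ V] {ω : V →ₗ[ℝ] V →ₗ[ℝ] ℝ}

/-- Two points of the Heisenberg group `V × ℝ` with law
`(z, t) · (ζ, τ) = (z + ζ, t + τ + ω z ζ)` are horizontally related if they lie on a common
horizontal line, that is, `q = p · (ζ, 0)` for some `ζ`. -/
def Horizontal (ω : V →ₗ[ℝ] V →ₗ[ℝ] ℝ) (p q : V × ℝ) : Prop :=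
  q.2 - p.2 = ω p.1 q.1

/-- Horizontal convexity for the Heisenberg group `V × ℝ` of an alternating form `ω`. Horizontal
segments are segments of the real vector space `V × ℝ`. -/
def HorizConvex (ω : V →ₗ[ℝ] V →ₗ[ℝ] ℝ) (C : Set (V × ℝ)) : Prop :=
  ∀ ⦃p⦄, p ∈ C → ∀ ⦃q⦄, q ∈ C → Horizontal ω p q → segment ℝ p q ⊆ C

/-- Precise monotonicity for the Heisenberg group `V × ℝ` of an alternating form `ω`. -/
def PreciselyMonotone (ω : V →ₗ[ℝ] V →ₗ[ℝ] ℝ) (E : Set (V × ℝ)) : Prop :=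
  HorizConvex ω E ∧ HorizConvex ω Eᶜ

/-- `F` contains the whole line through any two horizontally related points of `F`. -/
def HorizAffine (ω : V →ₗ[ℝ] V →ₗ[ℝ] ℝ) (F : Set (V × ℝ)) : Prop :=
  ∀ ⦃p⦄, p ∈ F → ∀ ⦃q⦄, q ∈ F → Horizontal ω p q → ∀ s : ℝ, AffineMap.lineMap p q s ∈ F

theorem PreciselyMonotone.compl {E : Set (V × ℝ)} (hE : PreciselyMonotone ω E) :
    PreciselyMonotone ω Eᶜ :=
  ⟨hE.2, (compl_compl E).symm ▸ hE.1⟩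

theorem Horizontal.lineMap (hω : ω.IsAlt) {p q : V × ℝ} (h : Horizontal ω p q) (a b : ℝ) :
    Horizontal ω (AffineMap.lineMap p q a) (AffineMap.lineMap p q b) := by
  simp only [Horizontal, AffineMap.lineMap_apply_module, Prod.fst_add, Prod.snd_add, Prod.smul_fst,
    Prod.smul_snd, map_add, map_smul, LinearMap.add_apply, LinearMap.smul_apply, smul_eq_mul,
    hω.self_eq_zero] at h ⊢
  rw [← hω.neg p.1 q.1]
  linear_combination (b - a) * h

theorem Horizontal.symm (hω : ω.IsAlt) {p q : V × ℝ} (h : Horizontal ω p q) :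
    Horizontal ω q p := by
  simpa using h.lineMap hω 1 0

/-- The product `p · (ζ, 0)`. -/
def horizTranslate (ω : V →ₗ[ℝ] V →ₗ[ℝ] ℝ) (p : V × ℝ) (ζ : V) : V × ℝ :=
  (p.1 + ζ, p.2 + ω p.1 ζ)

@[simp]
theorem horizTranslate_zero (p : V × ℝ) : horizTranslate ω p 0 = p := by
  simp [horizTranslate]

theorem horizTranslate_smul (p : V × ℝ) (ζ : V) (s : ℝ) :
    horizTranslate ω p (s • ζ) = AffineMap.lineMap p (horizTranslate ω p ζ) s := by
  ext <;> simp [horizTranslate, AffineMap.lineMap_apply_module', add_comm]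

theorem horizontal_horizTranslate (hω : ω.IsAlt) (p : V × ℝ) (ζ : V) :
    Horizontal ω p (horizTranslate ω p ζ) := by
  simp [Horizontal, horizTranslate, hω.self_eq_zero]

theorem Horizontal.horizTranslate_sub (hω : ω.IsAlt) {p q : V × ℝ} (h : Horizontal ω p q) :
    horizTranslate ω p (q.1 - p.1) = q := by
  ext
  · simp [horizTranslate]
  · rw [Horizontal] at h
    simp only [horizTranslate, map_sub, hω.self_eq_zero]
    linear_combination -h

theorem HorizConvex.horizTranslate_mem (hω : ω.IsAlt) {C : Set (V × ℝ)} (hC : HorizConvex ω C)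
    {p : V × ℝ} {ζ : V} {a b s : ℝ} (ha : horizTranslate ω p (a • ζ) ∈ C)
    (hb : horizTranslate ω p (b • ζ) ∈ C) (has : a ≤ s) (hsb : s ≤ b) :
    horizTranslate ω p (s • ζ) ∈ C := by
  rw [horizTranslate_smul] at ha hb ⊢
  refine hC ha hb ((horizontal_horizTranslate hω p ζ).lineMap hω a b) ?_
  rw [← image_segment, segment_eq_Icc (has.trans hsb)]
  exact mem_image_of_mem _ ⟨has, hsb⟩

/-- The affine map `((x, y), t) ↦ p · (x u + y v, ω u v t)`. It carries the first Heisenberg group,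
defined by `planeForm`, into that of `ω`; depending on `u` and `v` it serves as an automorphism of
the first Heisenberg group or as a three-dimensional slice of a larger one. -/
def horizFrame (ω : V →ₗ[ℝ] V →ₗ[ℝ] ℝ) (p : V × ℝ) (u v : V) : ℍ₁ →ᵃ[ℝ] V × ℝ where
  toFun x := (p.1 + (x.1.1 • u + x.1.2 • v),
    p.2 + ω p.1 (x.1.1 • u + x.1.2 • v) + ω u v * x.2)
  linear :=
    { toFun x := (x.1.1 • u + x.1.2 • v, ω p.1 (x.1.1 • u + x.1.2 • v) + ω u v * x.2)
      map_add' x y := by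
        ext
        · simp only [Prod.fst_add, Prod.snd_add]; module
        · simp only [Prod.fst_add, Prod.snd_add, map_add, map_smul, smul_eq_mul]; ring
      map_smul' c x := by
        ext
        · simp only [Prod.smul_fst, Prod.smul_snd, RingHom.id_apply, smul_eq_mul]; module
        · simp only [Prod.smul_fst, Prod.smul_snd, RingHom.id_apply, map_add, map_smul,
            smul_eq_mul]
          ring }
  map_vadd' x y := by
    ext
    · simp only [vadd_eq_add, LinearMap.coe_mk, AddHom.coe_mk, Prod.fst_add, Prod.snd_add]; module
    · simp only [vadd_eq_add, LinearMap.coe_mk, AddHom.coe_mk, Prod.fst_add, Prod.snd_add, map_add,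
        map_smul, smul_eq_mul]
      ring

/-- The standard area form of the plane, whose Heisenberg group is `ℍ¹` up to rescaling the
centre. -/
def planeForm : ℝ × ℝ →ₗ[ℝ] ℝ × ℝ →ₗ[ℝ] ℝ :=
  LinearMap.mk₂ ℝ (fun z w ↦ z.1 * w.2 - z.2 * w.1)
    (fun _ _ _ ↦ by simp only [Prod.fst_add, Prod.snd_add]; ring)
    (fun _ _ _ ↦ by simp only [Prod.smul_fst, Prod.smul_snd, smul_eq_mul]; ring)
    (fun _ _ _ ↦ by simp only [Prod.fst_add, Prod.snd_add]; ring)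
    (fun _ _ _ ↦ by simp only [Prod.smul_fst, Prod.smul_snd, smul_eq_mul]; ring)

theorem planeForm_apply (z w : ℝ × ℝ) : planeForm z w = z.1 * w.2 - z.2 * w.1 := rfl

theorem isAlt_planeForm : planeForm.IsAlt := fun z ↦ by rw [planeForm_apply]; ring

theorem horizontal_planeForm_iff {p q : ℍ₁} :
    Horizontal planeForm p q ↔ q.2 - p.2 = p.1.1 * q.1.2 - p.1.2 * q.1.1 := Iff.rfl

theorem horizFrame_apply (p : V × ℝ) (u v : V) (x : ℍ₁) :
    horizFrame ω p u v x = (p.1 + (x.1.1 • u + x.1.2 • v),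
      p.2 + ω p.1 (x.1.1 • u + x.1.2 • v) + ω u v * x.2) := rfl

theorem Horizontal.horizFrame (hω : ω.IsAlt) (p : V × ℝ) (u v : V) {x y : ℍ₁}
    (h : Horizontal planeForm x y) :
    Horizontal ω (horizFrame ω p u v x) (horizFrame ω p u v y) := by
  rw [horizontal_planeForm_iff] at h
  simp only [Horizontal, horizFrame_apply, map_add, map_smul, LinearMap.add_apply,
    LinearMap.smul_apply, smul_eq_mul, hω.self_eq_zero]
  rw [← hω.neg p.1 u, ← hω.neg p.1 v, ← hω.neg u v]
  linear_combination (ω u v) * h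

theorem HorizConvex.preimage_horizFrame (hω : ω.IsAlt) {C : Set (V × ℝ)} (hC : HorizConvex ω C)
    (p : V × ℝ) (u v : V) : HorizConvex planeForm (horizFrame ω p u v ⁻¹' C) := by
  intro x hx y hy hxy
  rw [← image_subset_iff, image_segment]
  exact hC hx hy (hxy.horizFrame hω p u v)

theorem PreciselyMonotone.preimage_horizFrame (hω : ω.IsAlt) {E : Set (V × ℝ)}
    (hE : PreciselyMonotone ω E) (p : V × ℝ) (u v : V) :
    PreciselyMonotone planeForm (horizFrame ω p u v ⁻¹' E) :=
  ⟨hE.1.preimage_horizFrame hω p u v, hE.2.preimage_horizFrame hω p u v⟩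

theorem lineMap_mem_openSegment_lineMap {W : Type*} [AddCommGroup W] [Module ℝ W] (p q : W)
    {a b c : ℝ} (hab : a < b) (hbc : b < c) :
    AffineMap.lineMap p q b ∈
      openSegment ℝ (AffineMap.lineMap p q a) (AffineMap.lineMap p q c) := by
  rw [← image_openSegment, openSegment_eq_Ioo (hab.trans hbc)]
  exact mem_image_of_mem _ ⟨hab, hbc⟩

variable [TopologicalSpace V] [IsTopologicalAddGroup V] [ContinuousSMul ℝ V]

theorem HorizConvex.eventually_mem (hω : ω.IsAlt) {C : Set (V × ℝ)} (hC : HorizConvex ω C)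
    {q r : V × ℝ} {c : ℝ} (hc : 1 ≤ c) (hp : AffineMap.lineMap q r c ∈ interior C) :
    ∀ᶠ z : (V × ℝ) × (V × ℝ) in 𝓝 (q, r), z.1 ∈ C → Horizontal ω z.1 z.2 → z.2 ∈ C := by
  have hcont : Continuous fun z : (V × ℝ) × (V × ℝ) ↦ AffineMap.lineMap z.1 z.2 c := by
    simp only [AffineMap.lineMap_apply_module]
    fun_prop
  filter_upwards [hcont.continuousAt.preimage_mem_nhds (isOpen_interior.mem_nhds hp)]
    with z hz hz₁ hz₁₂
  refine hC hz₁ (interior_subset hz) (by simpa using hz₁₂.lineMap hω 0 c) ?_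
  rw [segment_eq_image_lineMap]
  refine ⟨c⁻¹, ⟨by positivity, inv_le_one_of_one_le₀ hc⟩, ?_⟩
  rw [AffineMap.lineMap_lineMap_right, inv_mul_cancel₀ (by positivity), AffineMap.lineMap_apply_one]

theorem continuous_horizTranslate [T2Space V] [FiniteDimensional ℝ V] (p : V × ℝ) :
    Continuous (horizTranslate ω p) :=
  (continuous_const.add continuous_id).prodMk
    (continuous_const.add (ω p.1).continuous_of_finiteDimensional)

end Horizontal

section HalfSpace

variable {W : Type*} [AddCommGroup W] [Module ℝ W]

/-- `E` lies between an open half-space and the corresponding closed one; a constant positive `f`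
is allowed, so that the whole space qualifies. -/
def IsHalfSpaceLike (E : Set W) : Prop :=
  ∃ f : W →ᵃ[ℝ] ℝ, (∃ v, 0 < f v) ∧ ∀ v, (0 < f v → v ∈ E) ∧ (v ∈ E → 0 ≤ f v)

theorem isHalfSpaceLike_univ : IsHalfSpaceLike (univ : Set W) :=
  ⟨AffineMap.const ℝ W 1, ⟨0, one_pos⟩, fun _ ↦ ⟨fun _ ↦ mem_univ _, fun _ ↦ zero_le_one⟩⟩

theorem IsHalfSpaceLike.of_preimage {W' : Type*} [AddCommGroup W'] [Module ℝ W'] {E : Set W'}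
    (g : W ≃ᵃ[ℝ] W') (h : IsHalfSpaceLike (g ⁻¹' E)) : IsHalfSpaceLike E := by
  obtain ⟨f, ⟨v, hv⟩, hf⟩ := h
  refine ⟨f.comp g.symm, ⟨g v, by simpa using hv⟩, fun w ↦ ?_⟩
  simpa using hf (g.symm w)

theorem pos_of_mem_interior [TopologicalSpace W] [IsTopologicalAddGroup W] [ContinuousSMul ℝ W]
    {E : Set W} {f : W →ᵃ[ℝ] ℝ} (hpos : ∃ v, 0 < f v) (hf : ∀ v ∈ E, 0 ≤ f v) {w : W}
    (hw : w ∈ interior E) : 0 < f w := by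
  obtain ⟨v, hv⟩ := hpos
  have hline : Tendsto (fun c : ℝ ↦ AffineMap.lineMap w v c) (𝓝[<] 0) (𝓝 w) := by
    have := (AffineMap.lineMap_continuous (R := ℝ) (p := w) (q := v)).tendsto 0
    rw [AffineMap.lineMap_apply_zero] at this
    exact this.mono_left nhdsWithin_le_nhds
  obtain ⟨c, hcE, hc⟩ :=
    ((hline.eventually (mem_interior_iff_mem_nhds.1 hw)).and self_mem_nhdsWithin).exists
  have hfc := hf _ hcE
  rw [AffineMap.apply_lineMap, AffineMap.lineMap_apply_module, smul_eq_mul, smul_eq_mul] at hfc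
  nlinarith [mul_pos_of_neg_of_neg hc (neg_neg_of_pos hv)]

end HalfSpace

section PlaneFrame

variable {u v : ℝ × ℝ} {E : Set ℍ₁}

theorem horizFrame_bijective (p : ℍ₁) (huv : planeForm u v ≠ 0) :
    Function.Bijective (horizFrame planeForm p u v) := by
  suffices h : Function.Injective (horizFrame planeForm p u v) from
    ⟨h, (AffineMap.linear_surjective_iff _).1
      (LinearMap.injective_iff_surjective.1 ((AffineMap.linear_injective_iff _).2 h))⟩
  rintro ⟨⟨x₁, y₁⟩, t₁⟩ ⟨⟨x₂, y₂⟩, t₂⟩ h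
  simp only [horizFrame_apply, Prod.ext_iff, Prod.fst_add, Prod.snd_add, Prod.smul_fst,
    Prod.smul_snd, smul_eq_mul, planeForm_apply] at h huv
  obtain ⟨⟨h₁, h₂⟩, h₃⟩ := h
  obtain rfl : x₁ = x₂ := mul_right_cancel₀ huv (by linear_combination v.2 * h₁ - v.1 * h₂)
  obtain rfl : y₁ = y₂ := mul_right_cancel₀ huv (by linear_combination u.1 * h₂ - u.2 * h₁)
  obtain rfl : t₁ = t₂ := mul_right_cancel₀ huv (by linear_combination h₃)
  rfl

/-- `horizFrame` for linearly independent `u` and `v` in the plane, as an affine automorphism. -/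
def planeFrame (p : ℍ₁) (huv : planeForm u v ≠ 0) : ℍ₁ ≃ᴬ[ℝ] ℍ₁ :=
  AffineEquiv.toContinuousAffineEquiv (AffineEquiv.ofBijective (horizFrame_bijective p huv))

theorem preimage_horizFrame_interior (p : ℍ₁) (huv : planeForm u v ≠ 0) :
    horizFrame planeForm p u v ⁻¹' interior E = interior (horizFrame planeForm p u v ⁻¹' E) :=
  (planeFrame p huv).toHomeomorph.preimage_interior E

theorem preimage_horizFrame_closure (p : ℍ₁) (huv : planeForm u v ≠ 0) :
    horizFrame planeForm p u v ⁻¹' closure E = closure (horizFrame planeForm p u v ⁻¹' E) :=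
  (planeFrame p huv).toHomeomorph.preimage_closure E

theorem preimage_horizFrame_frontier (p : ℍ₁) (huv : planeForm u v ≠ 0) :
    horizFrame planeForm p u v ⁻¹' frontier E = frontier (horizFrame planeForm p u v ⁻¹' E) :=
  (planeFrame p huv).toHomeomorph.preimage_frontier E

theorem IsHalfSpaceLike.of_preimage_horizFrame (p : ℍ₁) (huv : planeForm u v ≠ 0)
    (h : IsHalfSpaceLike (horizFrame planeForm p u v ⁻¹' E)) : IsHalfSpaceLike E :=
  h.of_preimage (planeFrame p huv).toAffineEquiv

theorem planeForm_perp_ne_zero (hu : u ≠ 0) : planeForm u (-u.2, u.1) ≠ 0 := by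
  contrapose! hu
  rw [planeForm_apply] at hu
  obtain ⟨h₁, h₂⟩ := mul_self_add_mul_self_eq_zero.1
    (show u.1 * u.1 + u.2 * u.2 = 0 by linear_combination hu)
  exact Prod.ext h₁ h₂

end PlaneFrame

section Accessibility

variable {E : Set ℍ₁}

/-- The height of the point above `(m, k)` that is horizontally related to `y`. -/
def liftHeight (m k : ℝ) (y : ℍ₁) : ℝ :=
  y.2 + y.1.1 * k - y.1.2 * m

/-- The `η` for which `x · ((0, η), 0)` is horizontally related to the lift of `(m, k)` from `y`;
it is meaningful for `x.1.1 ≠ m` only. -/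
def relayShift (m k : ℝ) (y x : ℍ₁) : ℝ :=
  (liftHeight m k y - x.2 - x.1.1 * k + x.1.2 * m) / (x.1.1 - m)

theorem horizontal_liftHeight (m k : ℝ) (y : ℍ₁) :
    Horizontal planeForm y ((m, k), liftHeight m k y) := by
  simp only [horizontal_planeForm_iff, liftHeight]
  ring

theorem horizontal_relayShift {m k : ℝ} {y x : ℍ₁} (hx : x.1.1 ≠ m) :
    Horizontal planeForm ((m, k), liftHeight m k y)
      (horizTranslate planeForm x (relayShift m k y x • (0, 1))) := by
  simp only [horizontal_planeForm_iff, horizTranslate, planeForm_apply, relayShift, Prod.smul_mk,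
    Prod.fst_add, Prod.snd_add, smul_eq_mul, mul_zero, mul_one, add_zero, sub_zero]
  field_simp [sub_ne_zero.2 hx]
  ring

theorem continuousAt_relayShift {m k : ℝ} {y x : ℍ₁} (hx : x.1.1 ≠ m) :
    ContinuousAt (fun z : ℝ × ℍ₁ × ℍ₁ ↦ relayShift m z.1 z.2.1 z.2.2) (k, y, x) := by
  unfold relayShift liftHeight
  exact ContinuousAt.div (by fun_prop) (by fun_prop) (sub_ne_zero.2 hx)

theorem lineMap_axis_eq_zero {a b : ℝ} (h : a ≠ b) :
    AffineMap.lineMap (((a, 0), 0) : ℍ₁) ((b, 0), 0) (a / (a - b)) = 0 := by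
  have := sub_ne_zero.2 h
  ext <;> simp only [AffineMap.lineMap_apply_module', Prod.mk_sub_mk, Prod.smul_mk, Prod.mk_add_mk,
    sub_self, mul_zero, add_zero, smul_eq_mul, Prod.fst_zero, Prod.snd_zero]
  field_simp
  ring

theorem HorizConvex.eventually_relay_mem (hE : HorizConvex planeForm E) (h0 : 0 ∈ interior E)
    {s m : ℝ} (hs : 0 < s) (hsm : s < m) (hm : m < 1) :
    ∀ᶠ z : ℝ × ℍ₁ × ℍ₁ in 𝓝 (0, ((1, 0), 0), ((s, 0), 0)),
      z.2.1 ∈ E → horizTranslate planeForm z.2.2 (relayShift m z.1 z.2.1 z.2.2 • (0, 1)) ∈ E := by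
  set z₀ : ℝ × ℍ₁ × ℍ₁ := (0, ((1, 0), 0), ((s, 0), 0))
  let lift (z : ℝ × ℍ₁ × ℍ₁) : ℍ₁ := ((m, z.1), liftHeight m z.1 z.2.1)
  let target (z : ℝ × ℍ₁ × ℍ₁) : ℍ₁ :=
    horizTranslate planeForm z.2.2 (relayShift m z.1 z.2.1 z.2.2 • (0, 1))
  have hlift₀ : lift z₀ = ((m, 0), 0) := by simp [lift, z₀, liftHeight]
  have htarget₀ : target z₀ = ((s, 0), 0) := by
    simp [target, z₀, relayShift, liftHeight, horizTranslate, planeForm_apply]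
  have hη : ContinuousAt (fun z : ℝ × ℍ₁ × ℍ₁ ↦ relayShift m z.1 z.2.1 z.2.2) z₀ :=
    continuousAt_relayShift hsm.ne
  have hlift : ContinuousAt (fun z ↦ (z.2.1, lift z)) z₀ := by
    unfold lift liftHeight
    fun_prop
  have htarget : ContinuousAt (fun z ↦ (lift z, target z)) z₀ := by
    simp only [lift, target, liftHeight, horizTranslate, planeForm_apply]
    fun_prop
  have hlift_mem := hlift.eventually <| hE.eventually_mem isAlt_planeForm (c := 1 / (1 - m))
    (by rw [one_le_div] <;> linarith) (by rwa [hlift₀, lineMap_axis_eq_zero hm.ne'])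
  have htarget_mem := htarget.eventually <| hE.eventually_mem isAlt_planeForm (c := m / (m - s))
    (by rw [one_le_div] <;> linarith) (by rwa [hlift₀, htarget₀, lineMap_axis_eq_zero hsm.ne'])
  have hne : ∀ᶠ z in 𝓝 z₀, z.2.2.1.1 ≠ m :=
    ContinuousAt.eventually_ne (by fun_prop) hsm.ne
  filter_upwards [hlift_mem, htarget_mem, hne] with z h₁ h₂ hz hzE
  exact h₂ (h₁ hzE (horizontal_liftHeight ..)) (horizontal_relayShift hz)

theorem relayShift_axis {s : ℝ} (hs : s ≠ 1) (k : ℝ) :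
    relayShift ((1 + s) / 2) k ((1, 0), 0) ((s, 0), 0) = -2 * k := by
  have : s - (1 + s) / 2 ≠ 0 := fun h ↦ hs (by linarith)
  rw [relayShift, liftHeight, div_eq_iff this]
  ring

theorem HorizConvex.axis_mem_interior (hE : HorizConvex planeForm E) (h0 : 0 ∈ interior E)
    (h1 : ((1, 0), 0) ∈ closure E) {s : ℝ} (hs : s ∈ Ioo (0 : ℝ) 1) :
    ((s, 0), 0) ∈ interior E := by
  -- A point `x` near `(s, 0, 0)` is squeezed between two points of `E` on the line
  -- `η ↦ x · ((0, η), 0)`, which are reached from a point of `E` near `(1, 0, 0)` through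
  -- intermediate points above `(m, k)` and `(m, -k)`.
  obtain ⟨hs0, hs1⟩ := hs
  set m : ℝ := (1 + s) / 2 with hm
  have hrelay : ∀ᶠ k : ℝ in 𝓝 0, ∀ᶠ z : ℍ₁ × ℍ₁ in 𝓝 (((1, 0), 0), ((s, 0), 0)),
      z.1 ∈ E → horizTranslate planeForm z.2 (relayShift m k z.1 z.2 • (0, 1)) ∈ E :=
    (hE.eventually_relay_mem h0 hs0 (by linarith) (by linarith)).curry_nhds
  have hrelay_neg := (continuous_neg.tendsto' (0 : ℝ) 0 neg_zero).eventually hrelay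
  obtain ⟨k, ⟨hk₁, hk₂⟩, hk : 0 < k⟩ :=
    (((hrelay.and hrelay_neg).filter_mono nhdsWithin_le_nhds).and
      (self_mem_nhdsWithin (s := Ioi (0 : ℝ)))).exists
  have hshift (l : ℝ) : ContinuousAt (fun z : ℍ₁ × ℍ₁ ↦ relayShift m l z.1 z.2)
      (((1, 0), 0), ((s, 0), 0)) :=
    (continuousAt_relayShift (by simp only; linarith)).comp (f := fun z ↦ (l, z)) (by fun_prop)
  have hneg : ∀ᶠ z : ℍ₁ × ℍ₁ in 𝓝 (((1, 0), 0), ((s, 0), 0)), relayShift m k z.1 z.2 < 0 :=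
    (hshift k).eventually_lt continuousAt_const (by rw [relayShift_axis hs1.ne]; linarith)
  have hpos : ∀ᶠ z : ℍ₁ × ℍ₁ in 𝓝 (((1, 0), 0), ((s, 0), 0)), 0 < relayShift m (-k) z.1 z.2 :=
    continuousAt_const.eventually_lt (hshift (-k)) (by rw [relayShift_axis hs1.ne]; linarith)
  have hmem : ∀ᶠ y : ℍ₁ in 𝓝 ((1, 0), 0), ∀ᶠ x in 𝓝 ((s, 0), 0), y ∈ E → x ∈ E := by
    refine Eventually.curry_nhds (p := fun z : _ × _ ↦ z.1 ∈ E → z.2 ∈ E) ?_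
    filter_upwards [hk₁, hk₂, hneg, hpos] with z h₁ h₂ hneg hpos hz
    simpa using hE.horizTranslate_mem isAlt_planeForm (h₁ hz) (h₂ hz) hneg.le hpos.le
  obtain ⟨y, hyE, hy⟩ := ((mem_closure_iff_frequently.1 h1).and_eventually hmem).exists
  exact mem_interior_iff_mem_nhds.2 (hy.mono fun x hx ↦ hx hyE)

theorem HorizConvex.openSegment_subset_interior (hE : HorizConvex planeForm E)
    {p q : ℍ₁} (hp : p ∈ interior E) (hq : q ∈ closure E)
    (hpq : Horizontal planeForm p q) : openSegment ℝ p q ⊆ interior E := by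
  obtain hu | hu := eq_or_ne (q.1 - p.1) 0
  · have : q = p := by simpa [hu] using (hpq.horizTranslate_sub isAlt_planeForm).symm
    simpa [this] using hp
  have huv := planeForm_perp_ne_zero hu
  set φ := horizFrame planeForm p (q.1 - p.1) (-(q.1 - p.1).2, (q.1 - p.1).1)
  have hφ (s : ℝ) : φ ((s, 0), 0) = AffineMap.lineMap p q s := by
    conv_rhs => rw [← hpq.horizTranslate_sub isAlt_planeForm, ← horizTranslate_smul]
    simp [φ, horizFrame_apply, horizTranslate]
  rw [openSegment_eq_image_lineMap]
  rintro _ ⟨s, hs, rfl⟩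
  rw [← hφ, ← mem_preimage, preimage_horizFrame_interior p huv]
  refine (hE.preimage_horizFrame isAlt_planeForm _ _ _).axis_mem_interior ?_ ?_ hs
  · rw [← preimage_horizFrame_interior p huv, mem_preimage]
    rwa [← AffineMap.lineMap_apply_zero (k := ℝ) p q, ← hφ] at hp
  · rw [← preimage_horizFrame_closure p huv, mem_preimage]
    rwa [← AffineMap.lineMap_apply_one (k := ℝ) p q, ← hφ] at hq

end Accessibility

/-! ### The frontier of a precisely monotone set in `ℍ¹` -/

theorem subset_interior_or_of_disjoint_frontier {X : Type*} [TopologicalSpace X] {S E : Set X}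
    (hS : IsPreconnected S) (h : Disjoint S (frontier E)) : S ⊆ interior E ∨ S ⊆ interior Eᶜ := by
  refine hS.subset_or_subset isOpen_interior isOpen_interior ?_ ?_
  · exact disjoint_compl_right.mono interior_subset interior_subset
  · rw [← compl_frontier_eq_union_interior]
    exact h.subset_compl_right

section Frontier

variable {E : Set ℍ₁}

theorem mem_frontier_of_notMem_interior {X : Type*} [TopologicalSpace X] {E : Set X} {x : X}
    (h : x ∉ interior E) (h' : x ∉ interior Eᶜ) : x ∈ frontier E := by
  by_contra hx
  rw [← mem_compl_iff, compl_frontier_eq_union_interior] at hx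
  exact hx.elim h h'

theorem HorizConvex.lineMap_notMem_interior (hE : HorizConvex planeForm E) {p q : ℍ₁}
    (hp : p ∈ closure E) (hq : q ∉ interior E) (hpq : Horizontal planeForm p q) {s : ℝ}
    (hs : 1 < s) : AffineMap.lineMap p q s ∉ interior E := by
  intro hw
  have hrel := hpq.lineMap isAlt_planeForm s 0
  have hmem := lineMap_mem_openSegment_lineMap p q one_pos hs
  rw [AffineMap.lineMap_apply_zero] at hrel hmem
  rw [openSegment_symm, AffineMap.lineMap_apply_one] at hmem
  exact hq (hE.openSegment_subset_interior hw hp hrel hmem)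

theorem PreciselyMonotone.lineMap_notMem_interior (hE : PreciselyMonotone planeForm E)
    {p q : ℍ₁} (hp : p ∈ frontier E) (hq : q ∈ frontier E)
    (hpq : Horizontal planeForm p q) (s : ℝ) : AffineMap.lineMap p q s ∉ interior E := by
  obtain hs | rfl | hs := lt_trichotomy s 1
  · intro hw
    have hbeyond : AffineMap.lineMap p q (2 : ℝ) ∈ closure E := by
      rw [← compl_compl E, closure_compl]
      exact hE.2.lineMap_notMem_interior (frontier_compl E ▸ hp).1 (frontier_compl E ▸ hq).2 hpq
        one_lt_two
    have hmem := lineMap_mem_openSegment_lineMap p q hs one_lt_two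
    rw [AffineMap.lineMap_apply_one] at hmem
    exact hq.2 (hE.1.openSegment_subset_interior hw hbeyond
      (hpq.lineMap isAlt_planeForm s 2) hmem)
  · rw [AffineMap.lineMap_apply_one]
    exact hq.2
  · exact hE.1.lineMap_notMem_interior hp.1 hq.2 hpq hs

theorem PreciselyMonotone.horizAffine_frontier (hE : PreciselyMonotone planeForm E) :
    HorizAffine planeForm (frontier E) := fun _ hp _ hq hpq s ↦
  mem_frontier_of_notMem_interior (hE.lineMap_notMem_interior hp hq hpq s)
    (hE.compl.lineMap_notMem_interior (frontier_compl E ▸ hp) (frontier_compl E ▸ hq) hpq s)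

theorem HorizConvex.exists_horizTranslate_notMem_interior (hE : HorizConvex planeForm E)
    {p : ℍ₁} (hp : p ∉ interior E) :
    ∃ u : ℝ × ℝ, u ≠ 0 ∧ horizTranslate planeForm p u ∉ interior E := by
  by_contra! h
  let ζ : ℝ × ℝ := (1, 0)
  have hrel := (horizontal_horizTranslate isAlt_planeForm p ζ).lineMap isAlt_planeForm (-1) 1
  have hmem := lineMap_mem_openSegment_lineMap p (horizTranslate planeForm p ζ)
    (neg_one_lt_zero (R := ℝ)) one_pos
  simp only [← horizTranslate_smul, zero_smul, horizTranslate_zero] at hrel hmem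
  exact hp (hE.openSegment_subset_interior (h _ (by simp [ζ]))
    (subset_closure (interior_subset (h _ (by simp [ζ])))) hrel hmem)

theorem PreciselyMonotone.exists_line_subset_frontier (hE : PreciselyMonotone planeForm E)
    {p : ℍ₁} (hp : p ∈ frontier E) :
    ∃ u : ℝ × ℝ, u ≠ 0 ∧ ∀ r : ℝ, horizTranslate planeForm p (r • u) ∈ frontier E := by
  suffices h : ∃ u : ℝ × ℝ, u ≠ 0 ∧ horizTranslate planeForm p u ∈ frontier E by
    obtain ⟨u, hu, hpu⟩ := h
    refine ⟨u, hu, fun r ↦ ?_⟩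
    rw [horizTranslate_smul]
    exact hE.horizAffine_frontier hp hpu (horizontal_horizTranslate isAlt_planeForm p u) r
  by_contra! h
  have hconn : IsPreconnected (horizTranslate planeForm p '' {0}ᶜ) :=
    (isConnected_compl_singleton_of_one_lt_rank (by simp [one_add_one_eq_two]) 0)
      |>.isPreconnected.image _ (continuous_horizTranslate p).continuousOn
  have hdisj : Disjoint (horizTranslate planeForm p '' {0}ᶜ) (frontier E) := by
    rw [disjoint_left]
    rintro _ ⟨u, hu, rfl⟩
    exact h u hu
  obtain hsub | hsub := subset_interior_or_of_disjoint_frontier hconn hdisj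
  · obtain ⟨u, hu, hpu⟩ := hE.1.exists_horizTranslate_notMem_interior hp.2
    exact hpu (hsub (mem_image_of_mem _ hu))
  · obtain ⟨u, hu, hpu⟩ := hE.2.exists_horizTranslate_notMem_interior (frontier_compl E ▸ hp).2
    exact hpu (hsub (mem_image_of_mem _ hu))

end Frontier

/-! ### A nonempty precisely monotone set in `ℍ¹` has interior -/

section Slopes

variable {C E : Set ℍ₁}

/-- The slopes of the open rays `{((x, σ x), 0) | 0 < x}` that meet `C`. -/
def raySlopes (C : Set ℍ₁) : Set ℝ :=
  {σ | ∃ x, 0 < x ∧ ((x, σ * x), 0) ∈ C}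

/-- The slope, seen from the origin, of the point where the line through `a` and `b` crosses the
plane of height `0`; it is meaningful for `(a, b) ∈ straddlingPairs` only. -/
def crossSlope (a b : ℍ₁) : ℝ :=
  (a.2 * b.1.2 - b.2 * a.1.2) / (a.2 * b.1.1 - b.2 * a.1.1)

/-- Pairs of points in the half-space `0 < x` on either side of the plane of height `0`. -/
def straddlingPairs : Set (ℍ₁ × ℍ₁) :=
  {a | 0 < a.1.2 ∧ a.2.2 < 0 ∧ 0 < a.1.1.1 ∧ 0 < a.2.1.1}

theorem isOpen_straddlingPairs : IsOpen straddlingPairs := by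
  refine .and ?_ (.and ?_ (.and ?_ ?_)) <;>
    exact isOpen_lt (by fun_prop) (by fun_prop)

theorem crossSlope_denom_pos {a b : ℍ₁} (h : (a, b) ∈ straddlingPairs) :
    0 < a.2 * b.1.1 - b.2 * a.1.1 := by
  obtain ⟨ha, hb, hax, hbx⟩ := h
  nlinarith [mul_pos ha hbx, mul_pos (neg_pos.2 hb) hax]

theorem continuousOn_crossSlope :
    ContinuousOn (fun a : ℍ₁ × ℍ₁ ↦ crossSlope a.1 a.2) straddlingPairs :=
  .div (by fun_prop) (by fun_prop) fun _ ha ↦ (crossSlope_denom_pos ha).ne'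

theorem HorizConvex.crossSlope_mem_raySlopes (hC : HorizConvex planeForm C) {a b : ℍ₁}
    (ha : a ∈ C) (hb : b ∈ C) (hab : Horizontal planeForm a b) (h : (a, b) ∈ straddlingPairs) :
    crossSlope a b ∈ raySlopes C := by
  have hden := crossSlope_denom_pos h
  obtain ⟨hat, hbt, -, -⟩ := h
  have hsub : 0 < a.2 - b.2 := by linarith
  refine ⟨(a.2 * b.1.1 - b.2 * a.1.1) / (a.2 - b.2), div_pos hden hsub, hC ha hb hab ?_⟩
  refine ⟨-b.2 / (a.2 - b.2), a.2 / (a.2 - b.2), div_nonneg (by linarith) hsub.le,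
    div_nonneg hat.le hsub.le, by field_simp; ring, ?_⟩
  ext <;> simp only [crossSlope, Prod.fst_add, Prod.snd_add, Prod.smul_fst, Prod.smul_snd,
    smul_eq_mul]
  all_goals
    field_simp
    ring

/-- The points `z` for which the ray `z · ((s, 0), 0)`, with `s` running over the numbers of the
sign of `e`, stays in `C`. -/
def raySources (C : Set ℍ₁) (e : ℝ) : Set ℍ₁ :=
  {z | ∀ s, 0 ≤ e * s → horizTranslate planeForm z (s • (1, 0)) ∈ C}

theorem HorizConvex.compl_subset_raySources (hE : HorizConvex planeForm E) :
    Eᶜ ⊆ raySources Eᶜ 1 ∪ raySources Eᶜ (-1) := by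
  intro z hz
  by_contra h
  simp only [raySources, mem_union, mem_ofPred_eq, not_or, not_forall, mem_compl_iff, not_not] at h
  obtain ⟨⟨a, ha, haE⟩, b, hb, hbE⟩ := h
  have h0 := hE.horizTranslate_mem isAlt_planeForm (s := 0) hbE haE (by linarith) (by linarith)
  exact hz (by simpa using h0)

theorem HorizConvex.exists_mem_closure_raySources (hE : HorizConvex planeForm E) (hd : Dense Eᶜ)
    (z : ℍ₁) : ∃ e : ℝ, (e = 1 ∨ e = -1) ∧ z ∈ closure (raySources Eᶜ e) := by
  have hz := closure_mono hE.compl_subset_raySources (hd z)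
  rw [closure_union] at hz
  exact hz.elim (fun h ↦ ⟨1, .inl rfl, h⟩) fun h ↦ ⟨-1, .inr rfl, h⟩

/-- The parameter `K` for which the point with parameter `s` on the line through `z` in the
direction `(1, 0)` is horizontally related to the point with parameter `K - s` on the parallel
line through `w`; it is meaningful for `w.1.2 ≠ z.1.2` only. -/
def relatedParam (z w : ℍ₁) : ℝ :=
  (w.2 - z.2 - w.1.2 * z.1.1 + z.1.2 * w.1.1) / (w.1.2 - z.1.2)

/-- The horizontally related points with parameters `s` and `relatedParam z w - s`. -/
def relatedPair (z w : ℍ₁) (s : ℝ) : ℍ₁ × ℍ₁ :=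
  (horizTranslate planeForm z (s • (1, 0)),
    horizTranslate planeForm w ((relatedParam z w - s) • (1, 0)))

theorem horizontal_relatedPair {z w : ℍ₁} (h : w.1.2 ≠ z.1.2) (s : ℝ) :
    Horizontal planeForm (relatedPair z w s).1 (relatedPair z w s).2 := by
  have := sub_ne_zero.2 h
  simp only [relatedPair, relatedParam, horizontal_planeForm_iff, horizTranslate, planeForm_apply,
    Prod.fst_add, Prod.snd_add, Prod.smul_mk, smul_eq_mul]
  field_simp
  ring

theorem continuousAt_relatedParam {z w : ℍ₁} (h : w.1.2 ≠ z.1.2) :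
    ContinuousAt (fun a : ℍ₁ × ℍ₁ ↦ relatedParam a.1 a.2) (z, w) :=
  .div (by fun_prop) (by fun_prop) (sub_ne_zero.2 h)

theorem continuousAt_relatedPair {z w : ℍ₁} (h : w.1.2 ≠ z.1.2) (s : ℝ) :
    ContinuousAt (fun a : (ℍ₁ × ℍ₁) × ℝ ↦ relatedPair a.1.1 a.1.2 a.2) ((z, w), s) := by
  have hK : ContinuousAt (fun a : (ℍ₁ × ℍ₁) × ℝ ↦ relatedParam a.1.1 a.1.2) ((z, w), s) :=
    ContinuousAt.comp (f := Prod.fst) (x := ((z, w), s)) (continuousAt_relatedParam h)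
      continuousAt_fst
  simp only [relatedPair, horizTranslate, planeForm_apply]
  fun_prop

theorem HorizConvex.Icc_subset_raySlopes (hC : HorizConvex planeForm C) {z w : ℍ₁}
    (h : w.1.2 ≠ z.1.2) {e₁ e₂ a b : ℝ} (hz : z ∈ raySources C e₁) (hw : w ∈ raySources C e₂)
    (hab : a ≤ b)
    (hs : ∀ s ∈ Icc a b, relatedPair z w s ∈ straddlingPairs ∧ 0 ≤ e₁ * s ∧
      0 ≤ e₂ * (relatedParam z w - s)) :
    Icc (crossSlope (relatedPair z w a).1 (relatedPair z w a).2)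
      (crossSlope (relatedPair z w b).1 (relatedPair z w b).2) ⊆ raySlopes C := by
  have hpair : Continuous (relatedPair z w) := by
    rw [continuous_iff_continuousAt]
    exact fun s ↦ (continuousAt_relatedPair h s).comp (f := fun s ↦ ((z, w), s)) (by fun_prop)
  refine (intermediate_value_Icc hab (continuousOn_crossSlope.comp hpair.continuousOn
    fun s hsI ↦ (hs s hsI).1)).trans ?_
  rintro _ ⟨s, hsI, rfl⟩
  obtain ⟨hG, h₁, h₂⟩ := hs s hsI
  exact hC.crossSlope_mem_raySlopes (hz _ h₁) (hw _ h₂) (horizontal_relatedPair h s) hG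

theorem continuousAt_crossSlope_relatedPair {z w : ℍ₁} (h : w.1.2 ≠ z.1.2) {s : ℝ}
    (hs : relatedPair z w s ∈ straddlingPairs) :
    ContinuousAt (fun a : ℍ₁ × ℍ₁ ↦
      crossSlope (relatedPair a.1 a.2 s).1 (relatedPair a.1 a.2 s).2) (z, w) := by
  have hpair : ContinuousAt (fun a : ℍ₁ × ℍ₁ ↦ relatedPair a.1 a.2 s) (z, w) :=
    ContinuousAt.comp (f := fun a ↦ (a, s)) (continuousAt_relatedPair h s) (by fun_prop)
  exact ContinuousAt.comp (f := fun a : ℍ₁ × ℍ₁ ↦ relatedPair a.1 a.2 s)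
    (continuousOn_crossSlope.continuousAt (isOpen_straddlingPairs.mem_nhds hs)) hpair

theorem eventually_forall_relatedPair_mem {z w : ℍ₁} (h : w.1.2 ≠ z.1.2) {e a b : ℝ}
    (hs : ∀ s ∈ Icc a b, relatedPair z w s ∈ straddlingPairs ∧ 0 < e * (relatedParam z w - s)) :
    ∀ᶠ c : ℍ₁ × ℍ₁ in 𝓝 (z, w), ∀ s ∈ Icc a b,
      relatedPair c.1 c.2 s ∈ straddlingPairs ∧ 0 < e * (relatedParam c.1 c.2 - s) := by
  refine isCompact_Icc.eventually_forall_of_forall_eventually fun s hsI ↦ ?_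
  refine ((continuousAt_relatedPair h s).eventually
    (isOpen_straddlingPairs.mem_nhds (hs s hsI).1)).and ?_
  have hparam := ContinuousAt.comp (f := Prod.fst) (x := ((z, w), s))
    (continuousAt_relatedParam h) continuousAt_fst
  exact continuousAt_const.eventually_lt
    (.mul continuousAt_const (hparam.sub continuousAt_snd)) (hs s hsI).2

theorem HorizConvex.Icc_subset_raySlopes_of_mem_closure (hC : HorizConvex planeForm C)
    {z w : ℍ₁} (h : w.1.2 ≠ z.1.2) {e₁ e₂ a b σ₁ σ₂ : ℝ}
    (hz : z ∈ closure (raySources C e₁)) (hw : w ∈ closure (raySources C e₂)) (hab : a ≤ b)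
    (he₁ : ∀ s ∈ Icc a b, 0 ≤ e₁ * s)
    (hs : ∀ s ∈ Icc a b, relatedPair z w s ∈ straddlingPairs ∧ 0 < e₂ * (relatedParam z w - s))
    (hσ₁ : crossSlope (relatedPair z w a).1 (relatedPair z w a).2 < σ₁)
    (hσ₂ : σ₂ < crossSlope (relatedPair z w b).1 (relatedPair z w b).2) :
    Icc σ₁ σ₂ ⊆ raySlopes C := by
  have hleft := (continuousAt_crossSlope_relatedPair h
    (hs a (left_mem_Icc.2 hab)).1).eventually_lt continuousAt_const hσ₁
  have hright := continuousAt_const.eventually_lt (continuousAt_crossSlope_relatedPair h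
    (hs b (right_mem_Icc.2 hab)).1) hσ₂
  have hne : ∀ᶠ c : ℍ₁ × ℍ₁ in 𝓝 (z, w), c.2.1.2 - c.1.1.2 ≠ 0 :=
    ContinuousAt.eventually_ne (by fun_prop) (sub_ne_zero.2 h)
  have hfreq : ∃ᶠ c in 𝓝 (z, w), c ∈ raySources C e₁ ×ˢ raySources C e₂ := by
    rw [← mem_closure_iff_frequently, closure_prod_eq]
    exact ⟨hz, hw⟩
  obtain ⟨⟨z', w'⟩, ⟨hz', hw'⟩, hs', hleft', hright', hne'⟩ := (hfreq.and_eventually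
    ((eventually_forall_relatedPair_mem h hs).and (hleft.and (hright.and hne)))).exists
  refine (Icc_subset_Icc hleft'.le hright'.le).trans ?_
  exact hC.Icc_subset_raySlopes (sub_ne_zero.1 hne') hz' hw' hab fun s hsI ↦
    ⟨(hs' s hsI).1, he₁ s hsI, (hs' s hsI).2.le⟩

theorem relatedParam_model (b : ℝ) :
    relatedParam ((1, 1), 1) ((1 + b, -1), b - 1) = -b := by
  simp only [relatedParam]
  ring

theorem relatedPair_model (b s : ℝ) :
    relatedPair ((1, 1), 1) ((1 + b, -1), b - 1) s =
      (((1 + s, 1), 1 - s), ((1 - s, -1), -1 - s)) := by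
  simp only [relatedPair, relatedParam_model, horizTranslate, planeForm_apply, Prod.smul_mk,
    Prod.mk_add_mk, smul_eq_mul, Prod.mk.injEq]
  refine ⟨⟨⟨?_, ?_⟩, ?_⟩, ⟨?_, ?_⟩, ?_⟩ <;> ring

theorem crossSlope_model (s : ℝ) :
    crossSlope ((1 + s, 1), 1 - s) ((1 - s, -1), -1 - s) = s / (1 + s ^ 2) := by
  have hden : (1 - s) * (1 - s) - (-1 - s) * (1 + s) = 2 * (1 + s ^ 2) := by ring
  rw [crossSlope, hden, div_eq_div_iff (by positivity) (by positivity)]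
  ring

theorem crossSlope_model_mem_Ioo (s : ℝ) : s / (1 + s ^ 2) ∈ Ioo (-1 : ℝ) 1 := by
  have : 0 < 1 + s ^ 2 := by positivity
  rw [mem_Ioo, lt_div_iff₀ this, div_lt_iff₀ this]
  constructor <;> nlinarith [sq_nonneg (s - 1), sq_nonneg (s + 1)]

theorem crossSlope_model_lt {a b : ℝ} (ha : -1 < a) (hab : a < b) (hb : b < 1) :
    a / (1 + a ^ 2) < b / (1 + b ^ 2) := by
  rw [div_lt_div_iff₀ (by positivity) (by positivity)]
  nlinarith [mul_pos (sub_pos.2 hab) (show 0 < 1 - a * b by nlinarith)]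

theorem relatedPair_model_mem_straddlingPairs (b : ℝ) {s : ℝ} (hs : s ∈ Ioo (-1 : ℝ) 1) :
    relatedPair ((1, 1), 1) ((1 + b, -1), b - 1) s ∈ straddlingPairs := by
  rw [relatedPair_model]
  obtain ⟨h₁, h₂⟩ := hs
  refine ⟨?_, ?_, ?_, ?_⟩ <;> simp only <;> linarith

theorem PreciselyMonotone.exists_Icc_subset_raySlopes (hE : PreciselyMonotone planeForm E)
    (hd : Dense Eᶜ) : ∃ σ₁ σ₂, σ₁ < σ₂ ∧ -1 < σ₁ ∧ σ₂ < 1 ∧ Icc σ₁ σ₂ ⊆ raySlopes Eᶜ := by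
  obtain ⟨e₁, he₁, hz⟩ := hE.1.exists_mem_closure_raySources hd ((1, 1), 1)
  obtain ⟨e₂, he₂, hw⟩ := hE.1.exists_mem_closure_raySources hd ((1 + -e₁ / 2, -1), -e₁ / 2 - 1)
  -- The base points keep `relatedPair` the same for all `e₁`; an interval of length `1 / 4` around
  -- `e₁ / 2 - e₂ / 4` satisfies the sign conditions of both rays.
  obtain ⟨s₁, hs₁⟩ : ∃ s₁, s₁ = e₁ / 2 - e₂ / 4 - 1 / 8 := ⟨_, rfl⟩
  obtain ⟨s₂, hs₂⟩ : ∃ s₂, s₂ = e₁ / 2 - e₂ / 4 + 1 / 8 := ⟨_, rfl⟩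
  have h₁₂ : s₁ < s₂ := by linarith
  have hs (s : ℝ) (h : s ∈ Icc s₁ s₂) :
      s ∈ Ioo (-1 : ℝ) 1 ∧ 0 ≤ e₁ * s ∧ 0 < e₂ * (-(-e₁ / 2) - s) := by
    obtain ⟨h₁, h₂⟩ := h
    rcases he₁ with rfl | rfl <;> rcases he₂ with rfl | rfl <;>
      exact ⟨⟨by linarith, by linarith⟩, by linarith, by linarith⟩
  have hlt := crossSlope_model_lt (hs s₁ (left_mem_Icc.2 h₁₂.le)).1.1 h₁₂
    (hs s₂ (right_mem_Icc.2 h₁₂.le)).1.2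
  obtain ⟨σ₁, hσ₁, hσ₁'⟩ := exists_between hlt
  obtain ⟨σ₂, hσ₂, hσ₂'⟩ := exists_between hσ₁'
  refine ⟨σ₁, σ₂, hσ₂, (crossSlope_model_mem_Ioo s₁).1.trans hσ₁,
    hσ₂'.trans (crossSlope_model_mem_Ioo s₂).2, ?_⟩
  refine hE.2.Icc_subset_raySlopes_of_mem_closure (by norm_num) hz hw h₁₂.le
    (fun s h ↦ (hs s h).2.1) (fun s h ↦ ⟨relatedPair_model_mem_straddlingPairs _ (hs s h).1, ?_⟩)
    ?_ ?_
  · rw [relatedParam_model]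
    exact (hs s h).2.2
  · rwa [relatedPair_model, crossSlope_model]
  · rwa [relatedPair_model, crossSlope_model]

theorem PreciselyMonotone.zero_notMem_of_dense_compl (hE : PreciselyMonotone planeForm E)
    (hd : Dense Eᶜ) : (0 : ℍ₁) ∉ E := by
  obtain ⟨σ₁, σ₂, hσ, -, -, hI⟩ := hE.exists_Icc_subset_raySlopes hd
  -- The second application is to the frame in which the slopes `τ` in `(-1, 1)` are the slopes
  -- `m + ε τ` in `(σ₁, σ₂)`, on the opposite side of the origin.
  set m := (σ₁ + σ₂) / 2 with hm
  set ε := (σ₂ - σ₁) / 2 with hε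
  have huv : planeForm (-1, -m) (0, -ε) ≠ 0 := by
    simp only [planeForm_apply]
    linarith
  have hd' : Dense (horizFrame planeForm 0 (-1, -m) (0, -ε) ⁻¹' E)ᶜ := by
    rw [← preimage_compl, dense_iff_closure_eq, ← preimage_horizFrame_closure 0 huv,
      hd.closure_eq, preimage_univ]
  obtain ⟨τ, τ', hτ, hτ₁, hτ₂, hτI⟩ :=
    (hE.preimage_horizFrame isAlt_planeForm 0 _ _).exists_Icc_subset_raySlopes hd'
  obtain ⟨x, hx, hxE⟩ := hτI (left_mem_Icc.2 hτ.le)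
  obtain ⟨y, hy, hyE⟩ := hI (show m + ε * τ ∈ Icc σ₁ σ₂ by
    constructor <;> nlinarith)
  have h0 := hE.2.horizTranslate_mem isAlt_planeForm (p := 0) (ζ := (1, m + ε * τ)) (a := -x)
    (b := y) (s := 0) ?_ ?_ (by linarith) hy.le
  · simpa using h0
  · have : horizTranslate planeForm 0 (-x • (1, m + ε * τ)) =
        horizFrame planeForm 0 (-1, -m) (0, -ε) ((x, τ * x), 0) := by
      ext <;> simp only [horizTranslate, horizFrame_apply, planeForm_apply, Prod.smul_mk,
        Prod.fst_add, Prod.snd_add, Prod.fst_zero, Prod.snd_zero, smul_eq_mul] <;> ring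
    rwa [this]
  · have : horizTranslate planeForm 0 (y • (1, m + ε * τ)) = ((y, (m + ε * τ) * y), 0) := by
      ext <;> simp [horizTranslate, mul_comm]
    rwa [this]

theorem PreciselyMonotone.interior_nonempty (hE : PreciselyMonotone planeForm E)
    (hne : E.Nonempty) : (interior E).Nonempty := by
  obtain ⟨p, hp⟩ := hne
  rw [nonempty_iff_ne_empty]
  intro hint
  have huv : planeForm (1, 0) (0, 1) ≠ 0 := by simp [planeForm_apply]
  refine (hE.preimage_horizFrame isAlt_planeForm p (1, 0) (0, 1)).zero_notMem_of_dense_compl ?_ ?_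
  · rw [← interior_eq_empty_iff_dense_compl, ← preimage_horizFrame_interior p huv, hint,
      preimage_empty]
  · simpa [horizFrame_apply] using hp

theorem PreciselyMonotone.frontier_ne_univ (hE : PreciselyMonotone planeForm E) :
    frontier E ≠ univ := by
  intro h
  obtain rfl | hne := E.eq_empty_or_nonempty
  · rw [frontier_empty] at h
    exact empty_ne_univ h
  · obtain ⟨v, hv⟩ := hE.interior_nonempty hne
    exact (h ▸ mem_univ v : v ∈ frontier E).2 hv

end Slopes

/-! ### Classification in `ℍ¹` -/

theorem mem_of_forall_notMem_countable {X : Type*} [TopologicalSpace X] {F : Set X}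
    (hF : IsClosed F) {A : Set ℝ} (hA : A.Countable) {f : ℝ → X} (hf : Continuous f)
    (h : ∀ s ∉ A, f s ∈ F) (s : ℝ) : f s ∈ F :=
  (hF.preimage hf).closure_subset_iff.2 h (hA.dense_compl ℝ s)

theorem eq_neg_div_of_add_mul_eq_zero {c d x : ℝ} (hc : c ≠ 0) (h : c + d * x = 0) :
    x = -c / d := by
  have hd : d ≠ 0 := by
    rintro rfl
    exact hc (by simpa using h)
  rw [eq_div_iff hd]
  linear_combination h

section ThreeLines

variable {F : Set ℍ₁} {δ : ℝ}

theorem HorizAffine.mem_of_axes_of_ne_zero (hF : HorizAffine planeForm F)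
    (hx : ∀ x : ℝ, ((x, 0), 0) ∈ F) (hy : ∀ y : ℝ, ((0, y), 0) ∈ F)
    (hδ : ∀ y : ℝ, ((1 + δ * y, y), y) ∈ F) {a Y : ℝ} (hX : 1 + δ * Y ≠ 0)
    (hD : a + (a - 1) * (1 + δ * Y) ≠ 0) (r : ℝ) :
    ((a + r * (2 * a * (1 - a) + a * (2 - a) * δ * Y), r * Y), a * (r * Y)) ∈ F := by
  -- The line through `(X, Y, Y)` and the second axis is followed to a point horizontally related to
  -- `(a, 0, 0)`.
  obtain ⟨X, hXY⟩ : ∃ X, X = 1 + δ * Y := ⟨_, rfl⟩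
  obtain ⟨D, hDX⟩ : ∃ D, D = a + (a - 1) * X := ⟨_, rfl⟩
  have hXYF := hδ Y
  rw [← hXY] at hX hD hXYF
  rw [← hDX] at hD
  have hw : ((a * X / D, Y / D), a * Y / D) ∈ F := by
    convert hF (hy (-Y / X)) hXYF ?_ (a / D) using 1
    · ext <;> simp only [AffineMap.lineMap_apply_module', Prod.fst_add, Prod.snd_add,
        Prod.smul_fst, Prod.smul_snd, Prod.fst_sub, Prod.snd_sub, smul_eq_mul] <;> field_simp
      · ring
      · linear_combination Y * hDX
      · ring
    · rw [horizontal_planeForm_iff]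
      field_simp
      ring
  convert hF (hx a) hw ?_ (r * D) using 1
  · ext <;> simp only [AffineMap.lineMap_apply_module', Prod.fst_add, Prod.snd_add,
      Prod.smul_fst, Prod.smul_snd, Prod.fst_sub, Prod.snd_sub, smul_eq_mul] <;> field_simp
    · rw [hDX, hXY]
      ring
    · ring
    · ring
  · rw [horizontal_planeForm_iff]
    ring

theorem HorizAffine.mem_of_axes (hF : HorizAffine planeForm F) (hcl : IsClosed F)
    (hx : ∀ x : ℝ, ((x, 0), 0) ∈ F) (hy : ∀ y : ℝ, ((0, y), 0) ∈ F)
    (hδ : ∀ y : ℝ, ((1 + δ * y, y), y) ∈ F) {a : ℝ} (ha : 2 * a - 1 ≠ 0) (r Y : ℝ) :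
    ((a + r * (2 * a * (1 - a) + a * (2 - a) * δ * Y), r * Y), a * (r * Y)) ∈ F := by
  refine mem_of_forall_notMem_countable hcl
    (A := {-1 / δ, -(2 * a - 1) / ((a - 1) * δ)}) (by simp)
    (f := fun Y ↦ ((a + r * (2 * a * (1 - a) + a * (2 - a) * δ * Y), r * Y), a * (r * Y)))
    (by fun_prop) (fun Y hY ↦ ?_) Y
  simp only [mem_insert_iff, mem_singleton_iff, not_or] at hY
  refine hF.mem_of_axes_of_ne_zero hx hy hδ
    (fun h ↦ hY.1 (eq_neg_div_of_add_mul_eq_zero one_ne_zero h))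
    (fun h ↦ hY.2 (eq_neg_div_of_add_mul_eq_zero ha (by linear_combination h))) r

theorem HorizAffine.mk_mul_mem_of_axes (hF : HorizAffine planeForm F) (hcl : IsClosed F)
    (hx : ∀ x : ℝ, ((x, 0), 0) ∈ F) (hy : ∀ y : ℝ, ((0, y), 0) ∈ F)
    (hδ : ∀ y : ℝ, ((1 + δ * y, y), y) ∈ F) {a : ℝ} (ha₀ : a ≠ 0) (ha₁ : 1 - a ≠ 0)
    (ha : 2 * a - 1 ≠ 0) (x y : ℝ) : ((x, y), a * y) ∈ F := by
  refine mem_of_forall_notMem_countable hcl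
    (A := {a + a * (2 - a) * δ * y}) (by simp) (f := fun x ↦ ((x, y), a * y)) (by fun_prop)
    (fun x hxA ↦ ?_) x
  have hc : 2 * a * (1 - a) ≠ 0 := mul_ne_zero (mul_ne_zero two_ne_zero ha₀) ha₁
  obtain ⟨r, hr⟩ : ∃ r, r * (2 * a * (1 - a)) = x - (a + a * (2 - a) * δ * y) :=
    ⟨_, div_mul_cancel₀ _ hc⟩
  have hr₀ : r ≠ 0 := by
    rintro rfl
    exact hxA (mem_singleton_iff.2 (by linear_combination -hr))
  have hmem := hF.mem_of_axes hcl hx hy hδ ha r (y / r)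
  have hxr : a + r * (2 * a * (1 - a) + a * (2 - a) * δ * (y / r)) = x := by
    field_simp
    linear_combination hr
  rwa [hxr, mul_div_cancel₀ _ hr₀] at hmem

theorem HorizAffine.eq_univ_of_axes (hF : HorizAffine planeForm F) (hcl : IsClosed F)
    (hx : ∀ x : ℝ, ((x, 0), 0) ∈ F) (hy : ∀ y : ℝ, ((0, y), 0) ∈ F)
    (hδ : ∀ y : ℝ, ((1 + δ * y, y), y) ∈ F) : F = univ := by
  rw [eq_univ_iff_forall]
  rintro ⟨⟨x, y⟩, t⟩
  refine mem_of_forall_notMem_countable hcl (A := {0})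
    (by simp) (f := fun y ↦ ((x, y), t)) (by fun_prop) (fun y hy₀ ↦ ?_) y
  refine mem_of_forall_notMem_countable hcl (A := {0, y, y / 2})
    (by simp) (f := fun t ↦ ((x, y), t)) (by fun_prop) (fun t ht ↦ ?_) t
  simp only [mem_insert_iff, mem_singleton_iff, not_or] at ht hy₀
  obtain ⟨a, rfl⟩ : ∃ a, a * y = t := ⟨t / y, div_mul_cancel₀ t hy₀⟩
  obtain ⟨ht₀, ht₁, ht₂⟩ := ht
  refine hF.mk_mul_mem_of_axes hcl hx hy hδ (left_ne_zero_of_mul ht₀) (fun h ↦ ht₁ ?_)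
    (fun h ↦ ht₂ ?_) x y
  · linear_combination -y * h
  · linear_combination y / 2 * h

end ThreeLines

theorem PreciselyMonotone.isHalfSpaceLike_of_frontier_subset {E : Set ℍ₁}
    (hE : PreciselyMonotone planeForm E) (f : ℍ₁ →ᵃ[ℝ] ℝ)
    (hf : ∀ v ∈ frontier E, f v = 0) {p q m : ℍ₁} (hp : 0 < f p) (hq : f q < 0)
    (hpq : Horizontal planeForm p q) (hm : m ∈ frontier E) (hmpq : m ∈ openSegment ℝ p q) :
    IsHalfSpaceLike E := by
  have hpos := subset_interior_or_of_disjoint_frontier (E := E)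
    ((convex_Ioi (0 : ℝ)).affine_preimage f).isPreconnected
    (disjoint_left.2 fun v hv hvE ↦ hv.ne' (hf v hvE))
  have hneg := subset_interior_or_of_disjoint_frontier (E := E)
    ((convex_Iio (0 : ℝ)).affine_preimage f).isPreconnected
    (disjoint_left.2 fun v hv hvE ↦ hv.ne (hf v hvE))
  obtain hpos | hpos := hpos <;> obtain hneg | hneg := hneg
  · exact absurd (hE.1.openSegment_subset_interior (hpos hp)
      (subset_closure (interior_subset (hneg hq))) hpq hmpq) hm.2
  · refine ⟨f, ⟨p, hp⟩, fun v ↦ ⟨fun hv ↦ interior_subset (hpos hv), fun hvE ↦ ?_⟩⟩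
    exact not_lt.1 fun hv ↦ interior_subset (hneg hv) hvE
  · refine ⟨-f, ⟨q, by simpa using hq⟩, fun v ↦ ⟨fun hv ↦ interior_subset (hneg ?_), fun hvE ↦ ?_⟩⟩
    · simpa using hv
    · exact neg_nonneg.2 (not_lt.1 fun hv ↦ interior_subset (hpos hv) hvE)
  · exact absurd (hE.2.openSegment_subset_interior (hpos hp)
      (subset_closure (interior_subset (hneg hq))) hpq hmpq) (frontier_compl E ▸ hm).2

section Classification

variable {E : Set ℍ₁}

theorem PreciselyMonotone.height_eq_zero_of_axes_of_ne_zero (hE : PreciselyMonotone planeForm E)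
    (hx : ∀ x : ℝ, ((x, 0), 0) ∈ frontier E) (hy : ∀ y : ℝ, ((0, y), 0) ∈ frontier E)
    {z : ℍ₁} (hz : z ∈ frontier E) (hzy : z.1.2 ≠ 0) : z.2 = 0 := by
  obtain ⟨⟨p, q⟩, t⟩ := z
  simp only at hzy ⊢
  by_contra ht
  have huv : planeForm (t / q, 0) (0, q) ≠ 0 := by
    simpa [planeForm_apply, hzy] using ht
  have hE' := hE.preimage_horizFrame isAlt_planeForm 0 (t / q, 0) (0, q)
  have hmem (w : ℍ₁) : w ∈ frontier (horizFrame planeForm 0 (t / q, 0) (0, q) ⁻¹' E) ↔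
      ((w.1.1 * (t / q), w.1.2 * q), t * w.2) ∈ frontier E := by
    rw [← preimage_horizFrame_frontier 0 huv, mem_preimage, horizFrame_apply]
    simp [planeForm_apply, div_mul_cancel₀ t hzy]
  refine hE'.frontier_ne_univ (hE'.horizAffine_frontier.eq_univ_of_axes isClosed_frontier
    (δ := p * q / t - 1) ?_ ?_ ?_)
  · intro x
    simpa [hmem] using hx _
  · intro y
    simpa [hmem] using hy _
  · intro y
    have hxz : Horizontal planeForm ((t / q, 0), 0) ((p, q), t) := by
      rw [horizontal_planeForm_iff]
      field_simp
      ring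
    rw [hmem]
    convert hE.horizAffine_frontier (hx (t / q)) hz hxz y using 1
    ext <;> simp only [AffineMap.lineMap_apply_module', Prod.fst_add, Prod.snd_add,
      Prod.smul_fst, Prod.smul_snd, Prod.fst_sub, Prod.snd_sub, smul_eq_mul]
    · field_simp
      ring
    · ring
    · ring

theorem PreciselyMonotone.height_eq_zero_of_axes (hE : PreciselyMonotone planeForm E)
    (hx : ∀ x : ℝ, ((x, 0), 0) ∈ frontier E) (hy : ∀ y : ℝ, ((0, y), 0) ∈ frontier E)
    {z : ℍ₁} (hz : z ∈ frontier E) : z.2 = 0 := by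
  have height_eq_zero_of_ne {p t : ℝ} (hp : p ≠ 0) (h : ((p, 0), t) ∈ frontier E) : t = 0 := by
    by_contra ht
    have hrel : Horizontal planeForm ((p, 0), t) ((0, -t / p), 0) := by
      rw [horizontal_planeForm_iff]
      field_simp
      ring
    have hmid := hE.height_eq_zero_of_axes_of_ne_zero hx hy
      (hE.horizAffine_frontier h (hy (-t / p)) hrel (1 / 2)) ?_
    · simp only [AffineMap.lineMap_apply_module', Prod.snd_add, Prod.smul_snd, Prod.snd_sub,
        smul_eq_mul] at hmid
      exact ht (by linear_combination 2 * hmid)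
    · simp [AffineMap.lineMap_apply_module', ht, hp]
  obtain ⟨⟨p, q⟩, t⟩ := z
  obtain hq | rfl := ne_or_eq q 0
  · exact hE.height_eq_zero_of_axes_of_ne_zero hx hy hz hq
  obtain hp | rfl := ne_or_eq p 0
  · exact height_eq_zero_of_ne hp hz
  obtain ⟨⟨u, v⟩, huv, hline⟩ := hE.exists_line_subset_frontier hz
  have hmem : ((u, v), t) ∈ frontier E := by
    simpa [horizTranslate, planeForm_apply] using hline 1
  obtain hv | rfl := ne_or_eq v 0
  · exact hE.height_eq_zero_of_axes_of_ne_zero hx hy (z := ((u, v), t)) hmem hv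
  · exact height_eq_zero_of_ne (by simpa using huv) hmem

theorem PreciselyMonotone.isHalfSpaceLike_of_axes (hE : PreciselyMonotone planeForm E)
    (hx : ∀ x : ℝ, ((x, 0), 0) ∈ frontier E) (hy : ∀ y : ℝ, ((0, y), 0) ∈ frontier E) :
    IsHalfSpaceLike E :=
  hE.isHalfSpaceLike_of_frontier_subset (LinearMap.snd ℝ (ℝ × ℝ) ℝ).toAffineMap
    (fun _ ↦ hE.height_eq_zero_of_axes hx hy) (p := ((1, 1), 1)) (q := ((1, -1), -1))
    (by simp) (by simp) (by rw [horizontal_planeForm_iff]; norm_num) (hx 1)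
    ⟨1 / 2, 1 / 2, by norm_num, by norm_num, by norm_num, by ext <;> norm_num⟩

theorem PreciselyMonotone.isHalfSpaceLike_of_axis (hE : PreciselyMonotone planeForm E)
    (hx : ∀ x : ℝ, ((x, 0), 0) ∈ frontier E) : IsHalfSpaceLike E := by
  by_cases hplane : ∀ z ∈ frontier E, z.1.2 = 0
  · exact hE.isHalfSpaceLike_of_frontier_subset
      (LinearMap.snd ℝ ℝ ℝ ∘ₗ LinearMap.fst ℝ (ℝ × ℝ) ℝ).toAffineMap hplane
      (p := ((1, 1), 1)) (q := ((1, -1), -1)) (by simp) (by simp)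
      (by rw [horizontal_planeForm_iff]; norm_num) (hx 1)
      ⟨1 / 2, 1 / 2, by norm_num, by norm_num, by norm_num, by ext <;> norm_num⟩
  push Not at hplane
  obtain ⟨⟨⟨p, q⟩, t⟩, hz, hq⟩ := hplane
  simp only at hq
  have huv : planeForm (1, 0) (p - t / q, q) ≠ 0 := by simpa [planeForm_apply] using hq
  have hxz : Horizontal planeForm ((t / q, 0), 0) ((p, q), t) := by
    rw [horizontal_planeForm_iff]
    field_simp
    ring
  refine .of_preimage_horizFrame ((t / q, 0), 0) huv
    ((hE.preimage_horizFrame isAlt_planeForm _ _ _).isHalfSpaceLike_of_axes ?_ ?_)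
  · intro x
    rw [← preimage_horizFrame_frontier _ huv, mem_preimage, horizFrame_apply]
    simpa [planeForm_apply] using hx _
  · intro y
    rw [← preimage_horizFrame_frontier _ huv, mem_preimage, horizFrame_apply]
    convert hE.horizAffine_frontier (hx (t / q)) hz hxz y using 1
    ext <;> simp only [AffineMap.lineMap_apply_module', planeForm_apply, Prod.smul_mk,
      Prod.mk_add_mk, Prod.mk_sub_mk, smul_eq_mul] <;> field_simp <;> ring

theorem PreciselyMonotone.isHalfSpaceLike (hE : PreciselyMonotone planeForm E)
    (hne : E.Nonempty) : IsHalfSpaceLike E := by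
  obtain hfr | ⟨p, hp⟩ := (frontier E).eq_empty_or_nonempty
  · have hclopen : IsClopen E := isClopen_iff_frontier_eq_empty.2 hfr
    rw [hclopen.eq_univ hne]
    exact isHalfSpaceLike_univ
  obtain ⟨u, hu, hline⟩ := hE.exists_line_subset_frontier hp
  have huv := planeForm_perp_ne_zero hu
  refine .of_preimage_horizFrame p huv
    ((hE.preimage_horizFrame isAlt_planeForm p _ _).isHalfSpaceLike_of_axis fun x ↦ ?_)
  rw [← preimage_horizFrame_frontier p huv, mem_preimage, horizFrame_apply]
  simpa [horizTranslate] using hline x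

end Classification

/-! ### Reduction to `ℍ¹` -/

section InteriorConvex

variable {W : Type*} [AddCommGroup W] [Module ℝ W] [TopologicalSpace W] [IsTopologicalAddGroup W]
  [ContinuousSMul ℝ W] {E : Set W}

theorem IsHalfSpaceLike.openSegment_subset (h : IsHalfSpaceLike E) {p q : W} (hp : p ∈ E)
    (hq : q ∈ interior E) : openSegment ℝ p q ⊆ E := by
  obtain ⟨f, hpos, hf⟩ := h
  have hfp : 0 ≤ f p := (hf p).2 hp
  have hfq : 0 < f q := pos_of_mem_interior hpos (fun v ↦ (hf v).2) hq
  rw [openSegment_eq_image_lineMap]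
  rintro _ ⟨s, ⟨hs₀, hs₁⟩, rfl⟩
  apply (hf _).1
  rw [AffineMap.apply_lineMap, AffineMap.lineMap_apply_module, smul_eq_mul, smul_eq_mul]
  exact add_pos_of_nonneg_of_pos (mul_nonneg (sub_nonneg.2 hs₁.le) hfp) (mul_pos hs₀ hfq)

theorem openSegment_subset_interior_of_subset {p : W}
    (h : ∀ q ∈ interior E, openSegment ℝ p q ⊆ E) {q : W} (hq : q ∈ interior E) :
    openSegment ℝ p q ⊆ interior E := by
  rw [openSegment_eq_image_lineMap]
  rintro _ ⟨s, hs, rfl⟩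
  refine interior_maximal ?_ (AffineMap.homothety_isOpenMap p s hs.1.ne' _ isOpen_interior)
    (mem_image_of_mem _ hq)
  rintro _ ⟨r, hr, rfl⟩
  exact h r hr (lineMap_mem_openSegment ℝ p r hs)

theorem convex_interior_of_openSegment_subset
    (h : ∀ p ∈ E, ∀ q ∈ interior E, openSegment ℝ p q ⊆ E) : Convex ℝ (interior E) :=
  convex_iff_openSegment_subset.2 fun p hp _ hq ↦
    openSegment_subset_interior_of_subset (h p (interior_subset hp)) hq

theorem subset_closure_interior_of_openSegment_subset
    (h : ∀ p ∈ E, ∀ q ∈ interior E, openSegment ℝ p q ⊆ E) (hne : (interior E).Nonempty) :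
    E ⊆ closure (interior E) := by
  intro p hp
  obtain ⟨q, hq⟩ := hne
  exact closure_mono (openSegment_subset_interior_of_subset (h p hp) hq)
    (segment_subset_closure_openSegment (left_mem_segment ℝ p q))

end InteriorConvex

section Slices

variable {V : Type*} [AddCommGroup V] [Module ℝ V] {ω : V →ₗ[ℝ] V →ₗ[ℝ] ℝ}

theorem exists_horizFrame_eq [Nontrivial V] (hω : ω.SeparatingLeft) (p q : V × ℝ) :
    ∃ u v x, horizFrame ω p u v x = q := by
  obtain ⟨u, hu, a, ha⟩ : ∃ u : V, u ≠ 0 ∧ ∃ a : ℝ, a • u = q.1 - p.1 := by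
    obtain h | h := eq_or_ne (q.1 - p.1) 0
    · obtain ⟨u, hu⟩ := exists_ne (0 : V)
      exact ⟨u, hu, 0, by rw [zero_smul, h]⟩
    · exact ⟨_, h, 1, one_smul ℝ _⟩
  obtain ⟨v, hv⟩ : ∃ v, ω u v ≠ 0 := by
    by_contra! h
    exact hu (hω u h)
  refine ⟨u, v, ((a, 0), (q.2 - p.2 - ω p.1 (q.1 - p.1)) / ω u v), ?_⟩
  rw [horizFrame_apply, zero_smul, add_zero, ha, mul_div_cancel₀ _ hv]
  ext <;> simp only <;> abel

theorem continuous_horizFrame [TopologicalSpace V] [IsTopologicalAddGroup V] [ContinuousSMul ℝ V]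
    (p : V × ℝ) (u v : V) : Continuous (horizFrame ω p u v) := by
  simp only [funext (horizFrame_apply (ω := ω) p u v), map_add, map_smul]
  fun_prop

theorem PreciselyMonotone.openSegment_subset [TopologicalSpace V] [IsTopologicalAddGroup V]
    [ContinuousSMul ℝ V] [Nontrivial V] (hω : ω.IsAlt) (hω' : ω.SeparatingLeft)
    {E : Set (V × ℝ)} (hE : PreciselyMonotone ω E) :
    ∀ p ∈ E, ∀ q ∈ interior E, openSegment ℝ p q ⊆ E := by
  intro p hp q hq
  obtain ⟨u, v, x, rfl⟩ := exists_horizFrame_eq hω' p q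
  have hp₀ : horizFrame ω p u v 0 = p := by simp [horizFrame_apply]
  have h₀ : (0 : ℍ₁) ∈ horizFrame ω p u v ⁻¹' E := by rwa [mem_preimage, hp₀]
  nth_rw 1 [← hp₀]
  rw [← image_openSegment, image_subset_iff]
  exact ((hE.preimage_horizFrame hω p u v).isHalfSpaceLike ⟨0, h₀⟩).openSegment_subset h₀
    (preimage_interior_subset_interior_preimage (continuous_horizFrame p u v) hq)

theorem horizontal_of_mem_convexHull (hω : ω.IsAlt) {A : Set (V × ℝ)}
    (hA : ∀ p ∈ A, ∀ q ∈ A, Horizontal ω p q) {p q : V × ℝ} (hp : p ∈ convexHull ℝ A)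
    (hq : q ∈ convexHull ℝ A) : Horizontal ω p q := by
  have hconv (p : V × ℝ) : Convex ℝ {q | Horizontal ω p q} := by
    intro q hq r hr a b _ _ hab
    simp only [mem_ofPred_eq, Horizontal, Prod.fst_add, Prod.snd_add, Prod.smul_fst, Prod.smul_snd,
      map_add, map_smul, smul_eq_mul] at hq hr ⊢
    linear_combination a * hq + b * hr + p.2 * hab
  have hleft (p : V × ℝ) (hp : p ∈ A) : convexHull ℝ A ⊆ {q | Horizontal ω p q} :=
    convexHull_min (hA p hp) (hconv p)
  have hqp : Horizontal ω q p := convexHull_min (fun p hp ↦ (hleft p hp hq).symm hω) (hconv q) hp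
  exact hqp.symm hω

theorem HorizConvex.convexHull_subset (hω : ω.IsAlt) {C A : Set (V × ℝ)} (hC : HorizConvex ω C)
    (hAC : A ⊆ C) (hA : ∀ p ∈ A, ∀ q ∈ A, Horizontal ω p q) : convexHull ℝ A ⊆ C := by
  refine (convexHull_min (subset_inter hAC (subset_convexHull ℝ A)) ?_).trans inter_subset_left
  refine convex_iff_segment_subset.2 fun p hp q hq ↦ subset_inter ?_ ?_
  · exact hC hp.1 hq.1 (horizontal_of_mem_convexHull hω hA hp.2 hq.2)
  · exact (convex_convexHull ℝ A).segment_subset hp.2 hq.2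

theorem horizontal_horizFrame_horizFrame (hω : ω.IsAlt) (p : V × ℝ) {u v u' v' : V}
    (huu' : ω u u' = 0) (huv' : ω u v' = 0) (hvu' : ω v u' = 0) (hvv' : ω v v' = 0)
    {x y : ℍ₁} (h : ω u v * x.2 = ω u' v' * y.2) :
    Horizontal ω (horizFrame ω p u v x) (horizFrame ω p u' v' y) := by
  simp only [Horizontal, horizFrame_apply, map_add, map_smul, LinearMap.add_apply,
    LinearMap.smul_apply, smul_eq_mul, hω.self_eq_zero, huu', huv', hvu', hvv']
  rw [← hω.neg p.1 u, ← hω.neg p.1 v]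
  linear_combination -h

end Slices

theorem apply_mk_eq_of_forall_le {W : Type*} [AddCommGroup W] [Module ℝ W]
    (f : W × ℝ →ᵃ[ℝ] ℝ) {c t₀ : ℝ} (h : ∀ z, f (z, t₀) ≤ c) (z : W) (t : ℝ) :
    f (z, t) = f (0, t) := by
  have hadd (z : W) (t : ℝ) : f (z, t) = f.linear (z, 0) + f (0, t) := by
    simpa using f.map_vadd (0, t) (z, 0)
  have hzero : f.linear (z, 0) = 0 := by
    by_contra hz
    have hsmul (a : ℝ) : f.linear (a • z, 0) = a * f.linear (z, 0) := by
      simpa using f.linear.map_smul a (z, 0)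
    have hle := h (((c + 1 - f (0, t₀)) / f.linear (z, 0)) • z)
    rw [hadd, hsmul, div_mul_cancel₀ _ hz] at hle
    linarith
  rw [hadd, hzero, zero_add]

theorem IsHalfSpaceLike.forall_exists_mem_interior_or {W : Type*} [NormedAddCommGroup W]
    [NormedSpace ℝ W] [FiniteDimensional ℝ W] {S : Set (W × ℝ)} (h : IsHalfSpaceLike S) :
    (∀ t, ∃ z, (z, t) ∈ interior S) ∨ (interior {t | ((0 : W), t) ∈ S}).Nonempty ∧
      ∀ t ∈ interior {t | ((0 : W), t) ∈ S}, (0, t) ∈ interior S := by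
  obtain ⟨f, hpos, hf⟩ := h
  have hint (v : W × ℝ) (hv : 0 < f v) : v ∈ interior S :=
    interior_maximal (fun w ↦ (hf w).1)
      (isOpen_lt continuous_const f.continuous_of_finiteDimensional) hv
  rw [or_iff_not_imp_left]
  intro hvert
  push Not at hvert
  obtain ⟨t₀, ht₀⟩ := hvert
  have hf_indep := apply_mk_eq_of_forall_le f fun z ↦ not_lt.1 fun hz ↦ ht₀ z (hint _ hz)
  let g : ℝ →ᵃ[ℝ] ℝ := f.comp (LinearMap.inr ℝ W ℝ).toAffineMap
  have hg : ∃ t, 0 < g t := by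
    obtain ⟨⟨z, t⟩, hzt⟩ := hpos
    exact ⟨t, hf_indep z t ▸ hzt⟩
  refine ⟨?_, fun t ht ↦ hint _ (pos_of_mem_interior hg (fun t ↦ (hf (0, t)).2) ht)⟩
  obtain ⟨t, ht⟩ := hg
  exact ⟨t, interior_maximal (fun s ↦ (hf (0, s)).1)
    (isOpen_lt continuous_const g.continuous_of_finiteDimensional) ht⟩

/-! ### Coordinate slices of `ℍⁿ` -/

open ComplexConjugate

section Complex

variable {n : ℕ}

/-- The form `2 Im ⟨z, w⟩` in the group law of `ℍⁿ`. -/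
def heisForm (n : ℕ) : (Fin n → ℂ) →ₗ[ℝ] (Fin n → ℂ) →ₗ[ℝ] ℝ :=
  LinearMap.mk₂ ℝ (fun z w ↦ 2 * (∑ j, z j * conj (w j)).im)
    (fun _ _ _ ↦ by simp only [Pi.add_apply, add_mul, Finset.sum_add_distrib, Complex.add_im]; ring)
    (fun _ _ _ ↦ by
      simp only [Pi.smul_apply, smul_mul_assoc, ← Finset.smul_sum, Complex.smul_im, smul_eq_mul]
      ring)
    (fun _ _ _ ↦ by
      simp only [Pi.add_apply, map_add, mul_add, Finset.sum_add_distrib, Complex.add_im])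
    (fun _ _ _ ↦ by
      simp only [Pi.smul_apply, Complex.real_smul, map_mul, Complex.conj_ofReal,
        mul_left_comm _ (Complex.ofReal _), ← Finset.mul_sum, Complex.im_ofReal_mul, smul_eq_mul]
      ring)

theorem heisForm_apply (z w : Fin n → ℂ) :
    heisForm n z w = 2 * (∑ j, z j * conj (w j)).im := rfl

theorem isAlt_heisForm : (heisForm n).IsAlt := fun z ↦ by
  simp [heisForm_apply, Complex.mul_conj]

theorem heisForm_single (j k : Fin n) (a b : ℂ) :
    heisForm n (Pi.single j a) (Pi.single k b) = if j = k then 2 * (a * conj b).im else 0 := by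
  rw [heisForm_apply, Finset.sum_eq_single j (by simp +contextual [Pi.single_apply]) (by simp)]
  obtain rfl | hjk := eq_or_ne j k <;> simp [*]

theorem separatingLeft_heisForm : (heisForm n).SeparatingLeft := by
  intro z hz
  have hsum : ∑ j, Complex.normSq (z j) = 0 := by
    have h := hz (Complex.I • z)
    simpa [heisForm_apply, mul_left_comm, Complex.mul_conj, ← Finset.mul_sum] using h
  ext j
  exact Complex.normSq_eq_zero.1
    ((Finset.sum_eq_zero_iff_of_nonneg fun j _ ↦ Complex.normSq_nonneg (z j)).1 hsum j
      (Finset.mem_univ j))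

theorem heisMul_mk_zero (p : (Fin n → ℂ) × ℝ) (ζ : Fin n → ℂ) :
    heisMul p (ζ, 0) = horizTranslate (heisForm n) p ζ := by
  simp [heisMul, horizTranslate, heisForm_apply]

theorem horizConvex_of_heisConvex {C : Set ((Fin n → ℂ) × ℝ)} (hC : HeisConvex C) :
    HorizConvex (heisForm n) C := by
  intro p hp q hq hpq
  have htrans := hpq.horizTranslate_sub isAlt_heisForm
  rw [segment_eq_image_lineMap]
  rintro _ ⟨s, hs, rfl⟩
  rw [← htrans, ← horizTranslate_smul, ← heisMul_mk_zero]
  exact hC p _ hp (by rwa [heisMul_mk_zero, htrans]) s hs.1 hs.2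

/-- The slice through `p` along the `j`-th complex coordinate. -/
def coordSlice (p : (Fin n → ℂ) × ℝ) (j : Fin n) : ℍ₁ →ᵃ[ℝ] (Fin n → ℂ) × ℝ :=
  horizFrame (heisForm n) p (Pi.single j 1) (Pi.single j Complex.I)

/-- The coordinates, with respect to the slices `coordSlice p j`, of pairwise horizontally related
points whose average over `j` is `q`. -/
def sliceCoord (p : (Fin n → ℂ) × ℝ) (j : Fin n) (q : (Fin n → ℂ) × ℝ) : ℍ₁ :=
  ((n * (q.1 j - p.1 j).re, n * (q.1 j - p.1 j).im),
    (p.2 + heisForm n p.1 (q.1 - p.1) - q.2) / 2)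

theorem continuous_sliceCoord (p : (Fin n → ℂ) × ℝ) (j : Fin n) : Continuous (sliceCoord p j) := by
  have := (heisForm n p.1).continuous_of_finiteDimensional
  unfold sliceCoord
  fun_prop

theorem smul_single_one_add_smul_single_I (j : Fin n) (a b : ℝ) :
    a • (Pi.single j 1 : Fin n → ℂ) + b • (Pi.single j Complex.I : Fin n → ℂ) =
      Pi.single j ⟨a, b⟩ := by
  rw [← Pi.single_smul, ← Pi.single_smul, ← Pi.single_add]
  congr 1
  apply Complex.ext <;> simp

theorem coordSlice_apply (p : (Fin n → ℂ) × ℝ) (j : Fin n) (x : ℍ₁) :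
    coordSlice p j x = (p.1 + Pi.single j ⟨x.1.1, x.1.2⟩,
      p.2 + heisForm n p.1 (Pi.single j ⟨x.1.1, x.1.2⟩) - 2 * x.2) := by
  rw [coordSlice, horizFrame_apply, smul_single_one_add_smul_single_I, heisForm_single]
  simp [sub_eq_add_neg]

theorem sum_coordSlice_sliceCoord (hn : n ≠ 0) (p q : (Fin n → ℂ) × ℝ) :
    ∑ j, (n : ℝ)⁻¹ • coordSlice p j (sliceCoord p j q) = q := by
  have hn' : (n : ℝ) ≠ 0 := Nat.cast_ne_zero.2 hn
  have hterm (j : Fin n) : (n : ℝ)⁻¹ • coordSlice p j (sliceCoord p j q) =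
      (n : ℝ)⁻¹ • (p.1, q.2 - heisForm n p.1 (q.1 - p.1)) +
        (Pi.single j ((q.1 - p.1) j), heisForm n p.1 (Pi.single j ((q.1 - p.1) j))) := by
    have hsingle : (Pi.single j ⟨n * (q.1 j - p.1 j).re, n * (q.1 j - p.1 j).im⟩ : Fin n → ℂ) =
        (n : ℝ) • Pi.single j ((q.1 - p.1) j) := by
      rw [← Pi.single_smul]
      congr 1
      apply Complex.ext <;> simp
    rw [coordSlice_apply, sliceCoord, hsingle, map_smul]
    ext1
    · simp [smul_smul, hn']
    · simp only [Prod.smul_snd, Prod.snd_add, smul_eq_mul]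
      field_simp
      ring
  simp only [hterm, Finset.sum_add_distrib, Finset.sum_const, Finset.card_univ, Fintype.card_fin]
  rw [← Nat.cast_smul_eq_nsmul ℝ, smul_inv_smul₀ hn']
  ext1
  · rw [Prod.fst_add, Prod.fst_sum, Finset.univ_sum_single, add_sub_cancel]
  · rw [Prod.snd_add, Prod.snd_sum, ← map_sum, Finset.univ_sum_single, sub_add_cancel]

theorem horizontal_coordSlice (p : (Fin n → ℂ) × ℝ) {j k : Fin n} (hjk : j ≠ k)
    {x y : ℍ₁} (hxy : x.2 = y.2) :
    Horizontal (heisForm n) (coordSlice p j x) (coordSlice p k y) := by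
  apply horizontal_horizFrame_horizFrame isAlt_heisForm <;> simp [heisForm_single, hjk, hxy]

theorem exists_sliceCoord_eq (hn : n ≠ 0) (p : (Fin n → ℂ) × ℝ) (z : Fin n → ℝ × ℝ) (t : ℝ) :
    ∃ q, ∀ j, sliceCoord p j q = (z j, t) := by
  obtain ⟨c, hc⟩ : ∃ c : Fin n → ℂ, ∀ j, c j = ⟨(z j).1 / n, (z j).2 / n⟩ := ⟨_, fun _ ↦ rfl⟩
  have hn' : (n : ℝ) ≠ 0 := Nat.cast_ne_zero.2 hn
  refine ⟨(p.1 + c, p.2 + heisForm n p.1 c - 2 * t), fun j ↦ ?_⟩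
  ext <;> simp [sliceCoord, hc, mul_div_cancel₀ _ hn']

theorem HorizConvex.mem_of_forall_sliceCoord_mem {C : Set ((Fin n → ℂ) × ℝ)}
    (hC : HorizConvex (heisForm n) C) (hn : n ≠ 0) (p : (Fin n → ℂ) × ℝ) {q : (Fin n → ℂ) × ℝ}
    (h : ∀ j, coordSlice p j (sliceCoord p j q) ∈ C) : q ∈ C := by
  have hA : ∀ a ∈ range fun j ↦ coordSlice p j (sliceCoord p j q),
      ∀ b ∈ range fun j ↦ coordSlice p j (sliceCoord p j q), Horizontal (heisForm n) a b := by
    rintro _ ⟨j, rfl⟩ _ ⟨k, rfl⟩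
    obtain rfl | hjk := eq_or_ne j k
    · simp [Horizontal, isAlt_heisForm.self_eq_zero]
    · exact horizontal_coordSlice p hjk rfl
  refine hC.convexHull_subset isAlt_heisForm (range_subset_iff.2 h) hA ?_
  have hsum := (convex_convexHull ℝ (range fun j ↦ coordSlice p j (sliceCoord p j q))).sum_mem
    (t := Finset.univ) (w := fun _ ↦ (n : ℝ)⁻¹) (fun _ _ ↦ by positivity) (by simp [hn])
    fun j _ ↦ subset_convexHull ℝ _ (mem_range_self j)
  rwa [sum_coordSlice_sliceCoord hn p q] at hsum

variable {E : Set ((Fin n → ℂ) × ℝ)} {p : (Fin n → ℂ) × ℝ}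

theorem PreciselyMonotone.exists_forall_mem_interior_preimage_coordSlice
    (hE : PreciselyMonotone (heisForm n) E) (hp : p ∈ E) :
    ∃ t, ∀ j, ∃ z, (z, t) ∈ interior (coordSlice p j ⁻¹' E) := by
  have hhalf (j : Fin n) : IsHalfSpaceLike (coordSlice p j ⁻¹' E) :=
    (hE.preimage_horizFrame isAlt_heisForm p _ _).isHalfSpaceLike
      ⟨0, by simpa [horizFrame_apply] using hp⟩
  have haxis (j k : Fin n) : {t : ℝ | ((0 : ℝ × ℝ), t) ∈ coordSlice p j ⁻¹' E} =
      {t : ℝ | ((0 : ℝ × ℝ), t) ∈ coordSlice p k ⁻¹' E} := by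
    ext t
    simp [coordSlice, horizFrame_apply, heisForm_single]
  by_cases hvert : ∀ j, ∀ t, ∃ z, (z, t) ∈ interior (coordSlice p j ⁻¹' E)
  · exact ⟨0, fun j ↦ hvert j 0⟩
  · obtain ⟨k, hk⟩ := not_forall.1 hvert
    obtain ⟨⟨t, ht⟩, -⟩ := (hhalf k).forall_exists_mem_interior_or.resolve_left hk
    refine ⟨t, fun j ↦ ?_⟩
    obtain hj | ⟨-, hj⟩ := (hhalf j).forall_exists_mem_interior_or
    · exact hj t
    · exact ⟨0, hj t (haxis k j ▸ ht)⟩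

theorem PreciselyMonotone.interior_nonempty_of_heisForm (hE : PreciselyMonotone (heisForm n) E)
    (hn : n ≠ 0) (hne : E.Nonempty) : (interior E).Nonempty := by
  obtain ⟨p, hp⟩ := hne
  obtain ⟨t, ht⟩ := hE.exists_forall_mem_interior_preimage_coordSlice hp
  choose z hz using ht
  obtain ⟨q, hq⟩ := exists_sliceCoord_eq hn p z t
  refine ⟨q, interior_maximal (t := ⋂ j, sliceCoord p j ⁻¹' interior (coordSlice p j ⁻¹' E))
    (fun r hr ↦ ?_) ?_ ?_⟩
  · exact hE.1.mem_of_forall_sliceCoord_mem hn p fun j ↦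
      interior_subset (s := coordSlice p j ⁻¹' E) (mem_iInter.1 hr j)
  · exact isOpen_iInter_of_finite fun j ↦ isOpen_interior.preimage (continuous_sliceCoord p j)
  · exact mem_iInter.2 fun j ↦ by rw [mem_preimage, hq j]; exact hz j

theorem exists_forall_apply_eq_sum_re (f : (Fin n → ℂ) × ℝ →ₗ[ℝ] ℝ) :
    ∃ ν : (Fin n → ℂ) × ℝ, ∀ v, f v = (∑ j, (v.1 j * conj (ν.1 j)).re) + v.2 * ν.2 := by
  refine ⟨(fun j ↦ ⟨f (Pi.single j 1, 0), f (Pi.single j Complex.I, 0)⟩, f (0, 1)), fun v ↦ ?_⟩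
  have hv : v = ∑ j, ((v.1 j).re • (Pi.single j 1, 0) + (v.1 j).im • (Pi.single j Complex.I, 0)) +
      v.2 • (0, 1) := by
    ext1
    · simp [Prod.fst_sum, smul_single_one_add_smul_single_I, Finset.univ_sum_single]
    · simp [Prod.snd_sum]
  conv_lhs => rw [hv]
  simp only [map_add, map_sum, map_smul, smul_eq_mul, Complex.mul_re, Complex.conj_re,
    Complex.conj_im, mul_neg, sub_neg_eq_add]

end Complex

theorem exists_halfSpace_of_openSegment_subset {W : Type*} [AddCommGroup W] [Module ℝ W]
    [TopologicalSpace W] [IsTopologicalAddGroup W] [ContinuousSMul ℝ W] {E : Set W}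
    (hE : ∀ p ∈ E, ∀ q ∈ interior E, openSegment ℝ p q ⊆ E)
    (hEc : ∀ p ∈ Eᶜ, ∀ q ∈ interior Eᶜ, openSegment ℝ p q ⊆ Eᶜ)
    (hne : (interior E).Nonempty) (hnec : (interior Eᶜ).Nonempty) :
    ∃ f : W →L[ℝ] ℝ, f ≠ 0 ∧ ∃ c, {v | c < f v} ⊆ E ∧ E ⊆ closure {v | c < f v} := by
  obtain ⟨f, c, hlt, hgt⟩ := geometric_hahn_banach_open_open
    (convex_interior_of_openSegment_subset hEc) isOpen_interior
    (convex_interior_of_openSegment_subset hE) isOpen_interior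
    (disjoint_compl_left.mono interior_subset interior_subset)
  refine ⟨f, ?_, c, ?_, ?_⟩
  · rintro rfl
    obtain ⟨v, hv⟩ := hne
    obtain ⟨w, hw⟩ := hnec
    exact lt_asymm (hlt w hw) (hgt v hv)
  · rw [← compl_subset_compl]
    refine (subset_closure_interior_of_openSegment_subset hEc hnec).trans ?_
    exact closure_minimal (fun v hv ↦ not_lt.2 (hlt v hv).le)
      (isOpen_lt continuous_const f.continuous).isClosed_compl
  · exact (subset_closure_interior_of_openSegment_subset hE hne).trans (closure_mono hgt)

end Heisenberg

open Heisenberg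

/-- **Monotone sets in `ℍⁿ`:** a nontrivial precisely monotone set lies between an
open half-space (of `ℝ^{2n+1} ≅ ℂⁿ × ℝ`) and its closure. -/
theorem monotone_heisenberg_halfspace
    (n : ℕ) (hn : 1 ≤ n) (E : Set ((Fin n → ℂ) × ℝ))
    (hE : HeisConvex E ∧ HeisConvex Eᶜ)
    (h1 : E ≠ ∅) (h2 : E ≠ Set.univ) :
    ∃ ν : (Fin n → ℂ) × ℝ, ν ≠ 0 ∧ ∃ c : ℝ,
      {v : (Fin n → ℂ) × ℝ |
          c < (∑ j, (v.1 j * (starRingEnd ℂ) (ν.1 j)).re) + v.2 * ν.2} ⊆ E ∧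
      E ⊆ closure {v : (Fin n → ℂ) × ℝ |
          c < (∑ j, (v.1 j * (starRingEnd ℂ) (ν.1 j)).re) + v.2 * ν.2} := by
  have hn₀ : n ≠ 0 := Nat.one_le_iff_ne_zero.1 hn
  have : Nonempty (Fin n) := Fin.pos_iff_nonempty.1 hn
  have hmono : PreciselyMonotone (heisForm n) E :=
    ⟨horizConvex_of_heisConvex hE.1, horizConvex_of_heisConvex hE.2⟩
  obtain ⟨f, hf, c, hsub, hsup⟩ := exists_halfSpace_of_openSegment_subset
    (hmono.openSegment_subset isAlt_heisForm separatingLeft_heisForm)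
    (hmono.compl.openSegment_subset isAlt_heisForm separatingLeft_heisForm)
    (hmono.interior_nonempty_of_heisForm hn₀ (Set.nonempty_iff_ne_empty.2 h1))
    (hmono.compl.interior_nonempty_of_heisForm hn₀ (Set.nonempty_compl.2 h2))
  obtain ⟨ν, hν⟩ := exists_forall_apply_eq_sum_re f.toLinearMap
  simp only [ContinuousLinearMap.coe_coe] at hν
  refine ⟨ν, ?_, c, ?_, ?_⟩
  · rintro rfl
    exact hf (ContinuousLinearMap.ext fun v ↦ by simpa using hν v)
  · simpa only [← hν] using hsub
  · simpa only [← hν] using hsup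
end
end

section
/- Assume the Hörmander condition. Then there exist q ∈ ℕ and a constant c > 0 such that for every r > 0, the set {Σ_{k=1}^q Q(z_k,ζ_k) : z₁,ζ₁,…,z_q,ζ_q ∈ Z with Euclidean norm of the vector (z₁,ζ₁,…,z_q,ζ_q) ∈ Z^{2q} less than r} contains the Euclidean open ball in T centered at 0 of radius c r². -/
/- `Z = ℝ^m`, `T = ℝ^ℓ`, `Q : Z × Z → T` bilinear skew-symmetric satisfying the
Hörmander condition. The map `H_{2q}(z₁,ζ₁,…,z_q,ζ_q) = Σ_k Q(z_k,ζ_k)` is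
quadratically open at the origin. -/

noncomputable section

abbrev ZS (m : ℕ) := EuclideanSpace ℝ (Fin m)

abbrev TS (l : ℕ) := EuclideanSpace ℝ (Fin l)

/-! By the Hörmander condition `T` has a basis of values `Q (x k) (y k)`. The coordinates of `t` in
it are `O(‖t‖)`, and splitting each of them evenly, `a = u * v` with `‖u‖ ^ 2 = ‖v‖ ^ 2 = ‖a‖`,
writes `t = ∑ Q (u k • x k) (v k • y k)` with arguments whose squared norm is `O(‖t‖)`. -/

section

variable {𝕜 E F T ι : Type*} [RCLike 𝕜]

theorem exists_mul_eq_and_norm_sq_eq (a : 𝕜) :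
    ∃ u v : 𝕜, u * v = a ∧ ‖u‖ ^ 2 = ‖a‖ ∧ ‖v‖ ^ 2 = ‖a‖ := by
  rcases eq_or_ne a 0 with rfl | ha
  · exact ⟨0, 0, by simp⟩
  have sqrt_ne_zero : (√‖a‖ : 𝕜) ≠ 0 := by simpa using ha
  have norm_sqrt : ‖(√‖a‖ : 𝕜)‖ = √‖a‖ := RCLike.norm_of_nonneg (Real.sqrt_nonneg _)
  refine ⟨a / √‖a‖, √‖a‖, div_mul_cancel₀ a sqrt_ne_zero, ?_, ?_⟩
  · rw [norm_div, norm_sqrt, Real.div_sqrt, Real.sq_sqrt (norm_nonneg a)]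
  · rw [norm_sqrt, Real.sq_sqrt (norm_nonneg a)]

theorem exists_basis_fin_forall_mem_of_span_eq_top {K V : Type*} [DivisionRing K] [AddCommGroup V]
    [Module K V] [FiniteDimensional K V] {s : Set V} (hs : Submodule.span K s = ⊤) :
    ∃ (n : ℕ) (b : Module.Basis (Fin n) K V), ∀ i, b i ∈ s := by
  let b := Module.Basis.ofSpan hs.ge
  have := Module.Finite.finite_basis b
  refine ⟨_, b.reindex (Finite.equivFin _), fun i => ?_⟩
  rw [b.reindex_apply]
  exact Module.Basis.ofSpan_subset hs.ge (Set.mem_range_self _)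

theorem exists_forall_norm_repr_le {K V : Type*} [NontriviallyNormedField K] [CompleteSpace K]
    [NormedAddCommGroup V] [NormedSpace K V] [Finite ι] (b : Module.Basis ι K V) :
    ∃ C > 0, ∀ v i, ‖b.repr v i‖ ≤ C * ‖v‖ := by
  have := Fintype.ofFinite ι
  have := b.finiteDimensional_of_finite
  obtain ⟨C, C_pos, hC⟩ := (b.equivFunL : V →L[K] ι → K).bound
  exact ⟨C, C_pos, fun v i => (norm_le_pi_norm (b.equivFunL v) i).trans (hC v)⟩

variable [SeminormedAddCommGroup E] [NormedSpace 𝕜 E] [SeminormedAddCommGroup F] [NormedSpace 𝕜 F]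

theorem exists_sum_apply_eq_sum_smul_and_sum_norm_sq_eq [AddCommGroup T] [Module 𝕜 T] [Fintype ι]
    (Q : E →ₗ[𝕜] F →ₗ[𝕜] T) (a : ι → 𝕜) (x : ι → E) (y : ι → F) :
    ∃ (z : ι → E) (ζ : ι → F), ∑ k, Q (z k) (ζ k) = ∑ k, a k • Q (x k) (y k) ∧
      ∑ k, (‖z k‖ ^ 2 + ‖ζ k‖ ^ 2) = ∑ k, ‖a k‖ * (‖x k‖ ^ 2 + ‖y k‖ ^ 2) := by
  choose u v huv hu hv using fun k => exists_mul_eq_and_norm_sq_eq (a k)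
  refine ⟨fun k => u k • x k, fun k => v k • y k, ?_, ?_⟩
  · simp only [map_smul, LinearMap.smul_apply, smul_smul, mul_comm (v _), huv]
  · simp only [norm_smul, mul_pow, hu, hv, mul_add]

variable [NormedAddCommGroup T] [NormedSpace 𝕜 T] [FiniteDimensional 𝕜 T]

theorem exists_forall_sum_apply_eq_and_sum_norm_sq_le (Q : E →ₗ[𝕜] F →ₗ[𝕜] T)
    (hQ : Submodule.span 𝕜 (Set.range fun p : E × F => Q p.1 p.2) = ⊤) :
    ∃ q : ℕ, ∃ C > (0 : ℝ), ∀ t : T, ∃ (z : Fin q → E) (ζ : Fin q → F),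
      ∑ k, Q (z k) (ζ k) = t ∧ ∑ k, (‖z k‖ ^ 2 + ‖ζ k‖ ^ 2) ≤ C * ‖t‖ := by
  obtain ⟨q, b, b_mem⟩ := exists_basis_fin_forall_mem_of_span_eq_top hQ
  choose p hp using b_mem
  obtain ⟨C, C_pos, repr_le⟩ := exists_forall_norm_repr_le b
  set M := ∑ k, (‖(p k).1‖ ^ 2 + ‖(p k).2‖ ^ 2)
  have M_nonneg : 0 ≤ M := by positivity
  refine ⟨q, C * (M + 1), mul_pos C_pos (by linarith [M_nonneg]), fun t => ?_⟩
  obtain ⟨z, ζ, sum_eq, sum_norm_sq⟩ := exists_sum_apply_eq_sum_smul_and_sum_norm_sq_eq Q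
    (b.repr t) (fun k => (p k).1) (fun k => (p k).2)
  refine ⟨z, ζ, ?_, ?_⟩
  · simpa only [hp, b.sum_repr] using sum_eq
  · calc ∑ k, (‖z k‖ ^ 2 + ‖ζ k‖ ^ 2)
        = ∑ k, ‖b.repr t k‖ * (‖(p k).1‖ ^ 2 + ‖(p k).2‖ ^ 2) := sum_norm_sq
      _ ≤ ∑ k, C * ‖t‖ * (‖(p k).1‖ ^ 2 + ‖(p k).2‖ ^ 2) := by gcongr with k; exact repr_le t k
      _ = C * M * ‖t‖ := by rw [← Finset.mul_sum]; ring
      _ ≤ C * (M + 1) * ‖t‖ := by gcongr; exact (lt_add_one M).le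

theorem H2q_open_at_origin_general (Q : E →ₗ[𝕜] F →ₗ[𝕜] T)
    (hQ : Submodule.span 𝕜 (Set.range fun p : E × F => Q p.1 p.2) = ⊤) :
    ∃ q : ℕ, ∃ c > (0 : ℝ), ∀ r : ℝ, 0 < r → ∀ t : T, ‖t‖ < c * r ^ 2 →
      ∃ (z : Fin q → E) (ζ : Fin q → F),
        Real.sqrt (∑ k, (‖z k‖ ^ 2 + ‖ζ k‖ ^ 2)) < r ∧ ∑ k, Q (z k) (ζ k) = t := by
  obtain ⟨q, C, C_pos, hC⟩ := exists_forall_sum_apply_eq_and_sum_norm_sq_le Q hQ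
  refine ⟨q, C⁻¹, inv_pos.mpr C_pos, fun r r_pos t ht => ?_⟩
  obtain ⟨z, ζ, sum_eq, sum_norm_sq_le⟩ := hC t
  refine ⟨z, ζ, (Real.sqrt_lt' r_pos).mpr ?_, sum_eq⟩
  exact sum_norm_sq_le.trans_lt ((lt_inv_mul_iff₀ C_pos).mp ht)

end

/-- **Quadratic openness at the origin of `H_{2q}`.** -/
theorem H2q_open_at_origin
    (m l : ℕ) (hm : 0 < m) (hl : 0 < l)
    (Q : ZS m →ₗ[ℝ] ZS m →ₗ[ℝ] TS l)
    (hskew : ∀ z ζ : ZS m, Q z ζ = - Q ζ z)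
    (hHorm : Submodule.span ℝ (Set.range fun zz : ZS m × ZS m => Q zz.1 zz.2) = ⊤) :
    ∃ q : ℕ, ∃ c > (0 : ℝ), ∀ r : ℝ, 0 < r →
      ∀ t : TS l, ‖t‖ < c * r ^ 2 →
        ∃ zv ζv : Fin q → ZS m,
          Real.sqrt (∑ k, (‖zv k‖ ^ 2 + ‖ζv k‖ ^ 2)) < r ∧
          ∑ k, Q (zv k) (ζv k) = t := by
  exact H2q_open_at_origin_general Q hHorm
end
end

section
/- Let ℓ ≥ 2 be an integer and set q = 2ℓ+1. Then there exists an invertible linear map T_ℓ : Z^{2ℓ+1} → Z^{2ℓ+1}, written (u₁,…,u_{2ℓ+1}) ↦ (v₁,…,v_{2ℓ+1}), such that for all u₁,…,u_{2ℓ+1} ∈ Z one has P_{2ℓ+1}(u₁,…,u_{2ℓ+1}) = Σ_{k=1}^ℓ ((2ℓ+1)/(2k+1)) Q(v_{2k}, v_{2k+1}), where (v₁,…,v_{2ℓ+1}) = T_ℓ(u₁,…,u_{2ℓ+1}). -/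
/- `Z = ℝ^m`, `T = ℝ^ℓ`, `Q : Z × Z → T` bilinear skew-symmetric.
For `q ≥ 3`, `P_q(u₁,…,u_q) = Σ_{1≤j<k≤q} (q − 2(k−j)) Q(u_j,u_k)`
(here `u : Fin q → Z`, with `u i` playing the role of `u_{i+1}`). -/

noncomputable section

/-- The map `P_q(u₁,…,u_q) = Σ_{1≤j<k≤q} (q − 2(k−j)) Q(u_j,u_k)`. -/
def Pfun {m l : ℕ} (Q : ZS m →ₗ[ℝ] ZS m →ₗ[ℝ] TS l) (q : ℕ)
    (u : Fin q → ZS m) : TS l :=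
  ∑ jk ∈ Finset.univ.filter (fun jk : Fin q × Fin q => jk.1 < jk.2),
    ((q : ℝ) - 2 * (((jk.2 : ℕ) : ℝ) - ((jk.1 : ℕ) : ℝ))) • Q (u jk.1) (u jk.2)

/-!
As a form in its last two variables `x = u_{n+1}` and `y = u_{n+2}`, `P_{n+2}` has the shape
`B + Q(r, x) + Q(s, y) + n Q(x, y)` with `B`, `r`, `s` depending only on `u₁, …, u_n`, so skew
Gaussian elimination rewrites it as `B + n⁻¹ Q(s, r) + Q(s + n x, y - n⁻¹ r)`. The coefficients of
`r` and `s` differ by the constant `2`, hence `Q(s, r)` has coefficients `-4 (k - j)`, and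
`B + n⁻¹ Q(s, r) = ((n + 2) / n) P_n(u₁, …, u_n)`. Iterating from `P₁ = 0`, the factors
`(n + 2) / n` telescope to `(2ℓ + 1) / (2k + 1)`.
-/

theorem sum_lt_castSucc {A : Type*} [AddCommMonoid A] {n : ℕ}
    (f : Fin (n + 1) → Fin (n + 1) → A) :
    ∑ jk : Fin (n + 1) × Fin (n + 1) with jk.1 < jk.2, f jk.1 jk.2 =
      ∑ jk : Fin n × Fin n with jk.1 < jk.2, f jk.1.castSucc jk.2.castSucc +
        ∑ j : Fin n, f j.castSucc (Fin.last n) := by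
  simp only [Finset.sum_filter, Fintype.sum_prod_type_right, Fin.sum_univ_castSucc,
    Fin.castSucc_lt_castSucc_iff, Fin.castSucc_lt_last, (Fin.le_last _).not_gt, if_true, if_false,
    add_zero]

section Triangular

variable {R M : Type*} [Semiring R] [AddCommGroup M] [Module R M] {n : ℕ}

/-- Splitting off the last entry of a tuple, as a linear equivalence. -/
def initLastLinearEquiv : (Fin (n + 1) → M) ≃ₗ[R] (Fin n → M) × M where
  toFun u := (Fin.init u, u (Fin.last n))
  invFun p := Fin.snoc p.1 p.2
  map_add' _ _ := rfl
  map_smul' _ _ := rfl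
  left_inv u := Fin.snoc_init_self u
  right_inv p := by simp

/-- The block lower triangular extension `(u, x) ↦ (T u, e x + f u)` of an automorphism `T` of the
`n`-tuples to one of the `(n + 1)`-tuples. -/
def snocTriangular (T : (Fin n → M) ≃ₗ[R] (Fin n → M)) (e : M ≃ₗ[R] M)
    (f : (Fin n → M) →ₗ[R] M) : (Fin (n + 1) → M) ≃ₗ[R] (Fin (n + 1) → M) :=
  initLastLinearEquiv ≪≫ₗ T.skewProd e f ≪≫ₗ initLastLinearEquiv.symm

variable (T : (Fin n → M) ≃ₗ[R] (Fin n → M)) (e : M ≃ₗ[R] M) (f : (Fin n → M) →ₗ[R] M)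
  (u : Fin (n + 1) → M)

theorem snocTriangular_castSucc (i : Fin n) :
    snocTriangular T e f u i.castSucc = T (Fin.init u) i :=
  Fin.snoc_castSucc (α := fun _ ↦ M) ..

theorem snocTriangular_last :
    snocTriangular T e f u (Fin.last n) = e (u (Fin.last n)) + f (Fin.init u) :=
  Fin.snoc_last (α := fun _ ↦ M) ..

end Triangular

section CommRing

variable {R M N : Type*} [CommRing R] [AddCommGroup M] [Module R M] [AddCommGroup N] [Module R N]
  (Q : M →ₗ[R] M →ₗ[R] N)

/-- The form `∑_{j<k} (c - 2 (k - j)) Q(u_j, u_k)` in `n` variables. The paper's `P_q` is the case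
`n = q`, `c = q`; the elimination needs the weight `c` to be independent of `n`. -/
def gapForm {n : ℕ} (c : R) (u : Fin n → M) : N :=
  ∑ jk : Fin n × Fin n with jk.1 < jk.2,
    (c - 2 * (((jk.2 : ℕ) : R) - ((jk.1 : ℕ) : R))) • Q (u jk.1) (u jk.2)

/-- The linear form `∑_{0≤j<n} (c - 2 (n - j)) u_j`, which `gapForm Q c` pairs with an additional
last variable `u_n`. -/
def gapMoment (n : ℕ) (c : R) : (Fin n → M) →ₗ[R] M :=
  ∑ j : Fin n, (c - 2 * ((n : R) - ((j : ℕ) : R))) • LinearMap.proj j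

theorem gapMoment_apply {n : ℕ} (c : R) (u : Fin n → M) :
    gapMoment n c u = ∑ j : Fin n, (c - 2 * ((n : R) - ((j : ℕ) : R))) • u j := by
  simp [gapMoment]

theorem gapMoment_succ {n : ℕ} (c : R) (u : Fin (n + 1) → M) :
    gapMoment (n + 1) c u = gapMoment n (c - 2) (Fin.init u) + (c - 2) • u (Fin.last n) := by
  simp only [gapMoment_apply, Fin.sum_univ_castSucc, Fin.val_castSucc, Fin.val_last, Fin.init]
  congr! 3 <;> push_cast <;> ring

theorem gapForm_succ {n : ℕ} (c : R) (u : Fin (n + 1) → M) :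
    gapForm Q c u =
      gapForm Q c (Fin.init u) + Q (gapMoment n c (Fin.init u)) (u (Fin.last n)) := by
  rw [gapForm, sum_lt_castSucc fun j k : Fin (n + 1) ↦
    (c - 2 * (((k : ℕ) : R) - ((j : ℕ) : R))) • Q (u j) (u k)]
  simp [gapForm, gapMoment_apply, Fin.init]

theorem gapForm_one (c : R) (u : Fin 1 → M) : gapForm Q c u = 0 := by
  simp [gapForm, Finset.filter_false_of_mem]

variable {Q}

theorem apply_sum_smul_add_apply_smul_sum (hQ : Q.IsAlt) {ι : Type*} [Fintype ι]
    (a b : ι → R) (v : ι → M) (c d : R) (x : M) :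
    Q (∑ j, a j • v j) (d • x) + Q (c • x) (∑ j, b j • v j) =
      ∑ j, (a j * d - c * b j) • Q (v j) x := by
  simp only [map_sum, map_smul, LinearMap.sum_apply, LinearMap.smul_apply, ← hQ.neg _ x,
    Finset.smul_sum]
  rw [← Finset.sum_add_distrib]
  exact Finset.sum_congr rfl fun j _ ↦ by module

theorem apply_sum_smul_sum_smul (hQ : Q.IsAlt) {n : ℕ} (a b : Fin n → R) (u : Fin n → M) :
    Q (∑ j, a j • u j) (∑ j, b j • u j) =
      ∑ jk : Fin n × Fin n with jk.1 < jk.2,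
        (a jk.1 * b jk.2 - a jk.2 * b jk.1) • Q (u jk.1) (u jk.2) := by
  induction n with
  | zero => simp
  | succ n ih =>
    rw [sum_lt_castSucc fun j k ↦ (a j * b k - a k * b j) • Q (u j) (u k),
      ← ih (fun j ↦ a j.castSucc) (fun j ↦ b j.castSucc) (fun j ↦ u j.castSucc),
      ← apply_sum_smul_add_apply_smul_sum hQ]
    simp only [Fin.sum_univ_castSucc, map_add, LinearMap.add_apply]
    have last_last : Q (a (Fin.last n) • u (Fin.last n)) (b (Fin.last n) • u (Fin.last n)) = 0 := by
      simp [hQ (u (Fin.last n))]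
    rw [last_last, add_zero]
    abel

theorem apply_gapMoment_gapMoment (hQ : Q.IsAlt) {n : ℕ} (a b : R) (u : Fin n → M) :
    Q (gapMoment n a u) (gapMoment n b u) =
      ∑ jk : Fin n × Fin n with jk.1 < jk.2,
        (2 * (a - b) * (((jk.2 : ℕ) : R) - ((jk.1 : ℕ) : R))) • Q (u jk.1) (u jk.2) := by
  rw [gapMoment_apply, gapMoment_apply, apply_sum_smul_sum_smul hQ]
  congr! 2
  ring

end CommRing

section Field

variable {K M N : Type*} [Field K] [AddCommGroup M] [Module K M] [AddCommGroup N] [Module K N]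
  {Q : M →ₗ[K] M →ₗ[K] N}

theorem skew_gaussian_elimination (hQ : Q.IsAlt) {c : K} (hc : c ≠ 0) (r s x y : M) :
    Q r x + Q (s + c • x) y = c⁻¹ • Q s r + Q (s + c • x) (y - c⁻¹ • r) := by
  simp only [map_add, map_sub, map_smul, LinearMap.add_apply, LinearMap.smul_apply, ← hQ.neg r x]
  match_scalars <;> field

theorem gapForm_add_inv_smul_apply_gapMoment (hQ : Q.IsAlt) {n : ℕ} (hn : (n : K) ≠ 0)
    (u : Fin n → M) :
    gapForm Q (n + 2 : K) u + (n : K)⁻¹ • Q (gapMoment n (n : K) u) (gapMoment n (n + 2 : K) u) =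
      ((n + 2) / n : K) • gapForm Q (n : K) u := by
  rw [apply_gapMoment_gapMoment hQ]
  simp only [gapForm, Finset.smul_sum, ← Finset.sum_add_distrib, smul_smul, ← add_smul]
  congr! 2
  field

theorem gapForm_add_two (hQ : Q.IsAlt) {n : ℕ} (hn : (n : K) ≠ 0) (u : Fin (n + 2) → M) :
    gapForm Q (n + 2 : K) u =
      ((n + 2) / n : K) • gapForm Q (n : K) (Fin.init (Fin.init u)) +
        Q (gapMoment (n + 1) (n + 2 : K) (Fin.init u))
          (u (Fin.last (n + 1)) - (n : K)⁻¹ • gapMoment n (n + 2 : K) (Fin.init (Fin.init u))) := by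
  have moment_eq := gapMoment_succ (n + 2 : K) (Fin.init u)
  rw [add_sub_cancel_right] at moment_eq
  rw [gapForm_succ, gapForm_succ, moment_eq, add_assoc, skew_gaussian_elimination hQ hn,
    ← add_assoc, gapForm_add_inv_smul_apply_gapMoment hQ hn]

/-- One step of the change of variables: apply `T` to the first `n` entries and append the two
vectors that `gapForm_add_two` pairs with each other. -/
def eliminationStep {n : ℕ} (hn : (n : K) ≠ 0) (T : (Fin n → M) ≃ₗ[K] (Fin n → M)) :
    (Fin (n + 2) → M) ≃ₗ[K] (Fin (n + 2) → M) :=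
  snocTriangular (snocTriangular T (LinearEquiv.smulOfNeZero K M (n : K) hn) (gapMoment n (n : K)))
    (LinearEquiv.refl K M)
    (-(n : K)⁻¹ • gapMoment n (n + 2 : K) ∘ₗ LinearMap.funLeft K M Fin.castSucc)

section EliminationStep

variable {n : ℕ} (hn : (n : K) ≠ 0) (T : (Fin n → M) ≃ₗ[K] (Fin n → M)) (u : Fin (n + 2) → M)

theorem eliminationStep_castSucc_castSucc (i : Fin n) :
    eliminationStep hn T u i.castSucc.castSucc = T (Fin.init (Fin.init u)) i := by
  rw [eliminationStep, snocTriangular_castSucc, snocTriangular_castSucc]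

theorem eliminationStep_castSucc_last :
    eliminationStep hn T u (Fin.last n).castSucc = gapMoment (n + 1) (n + 2 : K) (Fin.init u) := by
  rw [eliminationStep, snocTriangular_castSucc, snocTriangular_last, gapMoment_succ,
    add_sub_cancel_right, add_comm]
  rfl

theorem eliminationStep_last :
    eliminationStep hn T u (Fin.last (n + 1)) =
      u (Fin.last (n + 1)) - (n : K)⁻¹ • gapMoment n (n + 2 : K) (Fin.init (Fin.init u)) := by
  rw [eliminationStep, snocTriangular_last, sub_eq_add_neg, ← neg_smul]
  rfl

theorem gapForm_add_two_eq_eliminationStep (hQ : Q.IsAlt) :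
    gapForm Q (n + 2 : K) u =
      ((n + 2) / n : K) • gapForm Q (n : K) (Fin.init (Fin.init u)) +
        Q (eliminationStep hn T u (Fin.last n).castSucc)
          (eliminationStep hn T u (Fin.last (n + 1))) := by
  rw [eliminationStep_castSucc_last, eliminationStep_last, gapForm_add_two hQ hn]

end EliminationStep

theorem isAlt_of_forall_eq_neg [CharZero K] (hskew : ∀ x y, Q x y = -Q y x) : Q.IsAlt := fun x ↦
  have := IsAddTorsionFree.of_isTorsionFree K N
  self_eq_neg.mp (hskew x x)

theorem P_odd_normal_form_general [CharZero K] (hQ : Q.IsAlt) (l : ℕ) :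
    ∃ T : (Fin (2 * l + 1) → M) ≃ₗ[K] (Fin (2 * l + 1) → M),
      ∀ u : Fin (2 * l + 1) → M,
        gapForm Q ((2 * l + 1 : ℕ) : K) u =
          ∑ k : Fin l, ((2 * (l : K) + 1) / (2 * ((k : ℕ) : K) + 3)) •
            Q (T u ⟨2 * k + 1, by omega⟩) (T u ⟨2 * k + 2, by omega⟩) := by
  induction l with
  | zero => exact ⟨LinearEquiv.refl K _, fun u ↦ by simp [gapForm_one]⟩
  | succ l ih =>
    obtain ⟨T, hT⟩ := ih
    have hn : ((2 * l + 1 : ℕ) : K) ≠ 0 := Nat.cast_ne_zero.mpr (by omega)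
    refine ⟨eliminationStep hn T, fun u ↦ ?_⟩
    have weight_eq : ((2 * (l + 1) + 1 : ℕ) : K) = ((2 * l + 1 : ℕ) : K) + 2 := by push_cast; ring
    have old_pair_coeff (k : Fin l) :
        (((2 * l + 1 : ℕ) : K) + 2) / ((2 * l + 1 : ℕ) : K) * ((2 * l + 1) / (2 * (k : ℕ) + 3)) =
          (2 * ((l + 1 : ℕ) : K) + 1) / (2 * (k : ℕ) + 3) := by
      rw [← weight_eq]
      push_cast at hn ⊢
      field
    have new_pair_coeff :
        (2 * ((l + 1 : ℕ) : K) + 1) / (2 * ((Fin.last l : ℕ) : K) + 3) = 1 := by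
      have denom_ne_zero : ((2 * l + 3 : ℕ) : K) ≠ 0 := Nat.cast_ne_zero.mpr (by omega)
      push_cast [Fin.val_last] at denom_ne_zero ⊢
      field
    rw [weight_eq, Fin.sum_univ_castSucc, new_pair_coeff, one_smul]
    refine (gapForm_add_two_eq_eliminationStep hn T u hQ).trans (congrArg (· + _) ?_)
    simp only [hT, Finset.smul_sum, smul_smul, old_pair_coeff,
      ← eliminationStep_castSucc_castSucc hn T u]
    rfl

end Field

/-- **Normal form of `P_{2ℓ+1}`:** there is an invertible linear change of variable
`(u₁,…,u_{2ℓ+1}) ↦ (v₁,…,v_{2ℓ+1})` such that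
`P_{2ℓ+1}(u) = Σ_{k=1}^ℓ ((2ℓ+1)/(2k+1)) Q(v_{2k}, v_{2k+1})`. -/
theorem P_odd_normal_form
    (m l' : ℕ) (hm : 0 < m) (hl' : 0 < l')
    (Q : ZS m →ₗ[ℝ] ZS m →ₗ[ℝ] TS l')
    (hskew : ∀ z ζ : ZS m, Q z ζ = - Q ζ z)
    (l : ℕ) (hl : 2 ≤ l) :
    ∃ T : (Fin (2 * l + 1) → ZS m) ≃ₗ[ℝ] (Fin (2 * l + 1) → ZS m),
      ∀ u : Fin (2 * l + 1) → ZS m,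
        Pfun Q (2 * l + 1) u =
          ∑ k : Fin l,
            ((2 * (l : ℝ) + 1) / (2 * ((k : ℕ) : ℝ) + 3)) •
              Q (T u ⟨2 * (k : ℕ) + 1, by have := k.isLt; omega⟩)
                (T u ⟨2 * (k : ℕ) + 2, by have := k.isLt; omega⟩) :=
  P_odd_normal_form_general (isAlt_of_forall_eq_neg hskew) l
end
end

section
/- Let E ⊆ G be precisely monotone and let P ∈ ∂E. Then for every pair of linearly independent vectors u, v ∈ Z there exists a nonzero vector w in the span of {u,v} such that the whole horizontal line {P·(sw,0) : s ∈ ℝ} is contained in ∂E. -/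
/- Step-two Carnot group `G = Z × T` with `Z = ℝ^m`, `T = ℝ^ℓ` and group law
`(z,t)·(ζ,τ) = (z+ζ, t+τ+Q(z,ζ))` for a bilinear skew-symmetric `Q`. -/

noncomputable section

/-- Group law of the step-two group. -/
def gmul {m l : ℕ} (Q : ZS m →ₗ[ℝ] ZS m →ₗ[ℝ] TS l)
    (p q : ZS m × TS l) : ZS m × TS l :=
  (p.1 + q.1, p.2 + q.2 + Q p.1 q.1)

/-- Horizontal convexity. -/
def HConvex {m l : ℕ} (Q : ZS m →ₗ[ℝ] ZS m →ₗ[ℝ] TS l)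
    (C : Set (ZS m × TS l)) : Prop :=
  ∀ p : ZS m × TS l, ∀ u : ZS m, p ∈ C → gmul Q p (u, 0) ∈ C →
    ∀ s : ℝ, 0 ≤ s → s ≤ 1 → gmul Q p (s • u, 0) ∈ C

/-!
Call a direction `w` at `P` positive if the ray from `P` along `w` meets the interior of `E`, or the
opposite ray meets the interior of `Eᶜ`. Both conditions are open. Precise monotonicity, applied on
the parallel lines through points near `P`, shows that `w` and `-w` are never both positive. If
neither is, the whole line through `P` along `w` lies in the boundary. Such a `w` exists in every
connected symmetric set of directions, since otherwise the positive directions and their negatives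
would disconnect it; the punctured plane spanned by `u` and `v` is connected and symmetric.
-/

open Set
open scoped Pointwise

theorem exists_mem_notMem_neg_notMem_of_isConnected {W : Type*} [TopologicalSpace W]
    [InvolutiveNeg W] [ContinuousNeg W] {S U : Set W} (hS : IsConnected S)
    (hSneg : ∀ w ∈ S, -w ∈ S) (hU : IsOpen U) (hdisj : Disjoint U (-U)) :
    ∃ w ∈ S, w ∉ U ∧ -w ∉ U := by
  by_contra! hcover
  have hsub : S ⊆ U ∪ -U := fun w hw => or_iff_not_imp_left.mpr (hcover w hw)
  obtain ⟨w, hw⟩ := hS.nonempty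
  have hmeet : (S ∩ U).Nonempty ∧ (S ∩ -U).Nonempty := by
    rcases hsub hw with hwU | hwU
    · exact ⟨⟨w, hw, hwU⟩, ⟨-w, hSneg w hw, by simpa using hwU⟩⟩
    · exact ⟨⟨-w, hSneg w hw, hwU⟩, ⟨w, hw, hwU⟩⟩
  obtain ⟨x, -, hxU, hxU'⟩ := hS.isPreconnected U (-U) hU hU.neg hsub hmeet.1 hmeet.2
  exact disjoint_left.mp hdisj hxU hxU'

theorem isAlt_of_skew {R M N : Type*} [CommRing R] [IsDomain R] [CharZero R] [AddCommMonoid M]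
    [Module R M] [AddCommGroup N] [Module R N] [Module.IsTorsionFree R N] {Q : M →ₗ[R] M →ₗ[R] N}
    (hskew : ∀ x y, Q x y = -Q y x) : Q.IsAlt :=
  have : IsAddTorsionFree N := .of_isTorsionFree R N
  fun x => self_eq_neg.mp (hskew x x)

theorem one_lt_rank_span_pair {R M : Type*} [Ring R] [StrongRankCondition R] [AddCommGroup M]
    [Module R M] {u v : M} (huv : LinearIndependent R ![u, v]) :
    1 < Module.rank R (Submodule.span R {u, v}) := by
  have := nontrivial_of_invariantBasisNumber R
  have hfinrank := finrank_span_eq_card huv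
  rw [Matrix.range_cons_cons_empty, Fintype.card_fin] at hfinrank
  exact_mod_cast Module.lt_rank_of_lt_finrank (Nat.one_lt_two.trans_eq hfinrank.symm)

theorem isConnected_submodule_diff_zero {W : Type*} [AddCommGroup W] [Module ℝ W]
    [TopologicalSpace W] [IsTopologicalAddGroup W] [ContinuousSMul ℝ W] {V : Submodule ℝ W}
    (hV : 1 < Module.rank ℝ V) : IsConnected ((V : Set W) \ {0}) := by
  have himage : Subtype.val '' ({0}ᶜ : Set V) = (V : Set W) \ {0} := by
    ext w
    simp [and_comm]
  rw [← himage]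
  exact (isConnected_compl_singleton_of_one_lt_rank hV 0).image _
    continuous_subtype_val.continuousOn

section DirectionalFlow

variable {X W : Type*} [AddCommGroup W] [Module ℝ W]

/-- `s ↦ φ x (s • w)` parametrizes the line through `x` in the direction `w`: for each `w` these
lines are the orbits of a flow on `X`, and `φ` is continuous in each variable separately. The model
case is `φ p w = p · (w, 0)` in a step-two group, whose orbits are the horizontal lines. -/
structure IsDirectionalFlow [TopologicalSpace X] [TopologicalSpace W] (φ : X → W → X) : Prop where
  zero : ∀ x, φ x 0 = x
  add_smul : ∀ x w (a b : ℝ), φ (φ x (a • w)) (b • w) = φ x ((a + b) • w)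
  continuous_left : ∀ w, Continuous fun x => φ x w
  continuous_right : ∀ x, Continuous (φ x)

/-- Convexity of `C` along the lines of `φ`, in the form of the horizontal convexity `HConvex`. -/
def OrbitConvex (φ : X → W → X) (C : Set X) : Prop :=
  ∀ x w, x ∈ C → φ x w ∈ C → ∀ s : ℝ, 0 ≤ s → s ≤ 1 → φ x (s • w) ∈ C

/-- Precise monotonicity of `E` with respect to the lines of `φ`. -/
def PreciselyMonotone (φ : X → W → X) (E : Set X) : Prop :=
  OrbitConvex φ E ∧ OrbitConvex φ Eᶜ

variable [TopologicalSpace X] {φ : X → W → X} {E : Set X} {P : X} {w : W}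

/-- The directions `w` whose open ray from `P` meets the interior of `E`. -/
def interiorDirections (φ : X → W → X) (E : Set X) (P : X) : Set W :=
  {w | ∃ s : ℝ, 0 < s ∧ φ P (s • w) ∈ interior E}

/-- The directions along which the line through `P` passes from `Eᶜ` to `E`, as witnessed by an
interior point on one of its two rays. -/
def positiveDirections (φ : X → W → X) (E : Set X) (P : X) : Set W :=
  interiorDirections φ E P ∪ -interiorDirections φ Eᶜ P

theorem neg_positiveDirections (φ : X → W → X) (E : Set X) (P : X) :
    -positiveDirections φ E P = positiveDirections φ Eᶜ P := by
  rw [positiveDirections, positiveDirections, compl_compl, union_neg, neg_neg, union_comm]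

theorem mem_positiveDirections_of_ne_zero {s : ℝ} (hs : s ≠ 0) (h : φ P (s • w) ∈ interior E) :
    w ∈ positiveDirections φ E P ∨ -w ∈ positiveDirections φ E P := by
  rcases hs.lt_or_gt with hneg | hpos
  · exact .inr (.inl ⟨-s, neg_pos.mpr hneg, by rwa [neg_smul_neg]⟩)
  · exact .inl (.inl ⟨s, hpos, h⟩)

namespace IsDirectionalFlow

variable [TopologicalSpace W]

theorem ordConnected_setOf_smul_mem (hφ : IsDirectionalFlow φ) {C : Set X} (hC : OrbitConvex φ C)
    (x : X) (w : W) : OrdConnected {s : ℝ | φ x (s • w) ∈ C} := by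
  refine ordConnected_of_Ioo fun a ha c hc hac b hb => ?_
  have hlen : 0 < c - a := sub_pos.mpr hac
  have hend : φ (φ x (a • w)) ((c - a) • w) ∈ C := by
    rwa [hφ.add_smul, add_sub_cancel]
  have hmid := hC _ _ ha hend ((b - a) / (c - a))
    (div_nonneg (sub_nonneg.mpr hb.1.le) hlen.le)
    ((div_le_one hlen).mpr (sub_le_sub_right hb.2.le a))
  rwa [smul_smul, div_mul_cancel₀ _ hlen.ne', hφ.add_smul, add_sub_cancel] at hmid

theorem exists_mem_of_mem_closure (hφ : IsDirectionalFlow φ) {S A B : Set X} {y z : W}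
    (hP : P ∈ closure S) (hy : φ P y ∈ interior A) (hz : φ P z ∈ interior B) :
    ∃ x ∈ S, φ x y ∈ A ∧ φ x z ∈ B := by
  have hopen := (isOpen_interior.preimage (hφ.continuous_left y) (t := interior A)).inter
    (isOpen_interior.preimage (hφ.continuous_left z) (t := interior B))
  obtain ⟨x, ⟨hxA, hxB⟩, hxS⟩ := mem_closure_iff.mp hP _ hopen ⟨hy, hz⟩
  exact ⟨x, hxS, interior_subset hxA, interior_subset hxB⟩

theorem disjoint_interiorDirections_neg (hφ : IsDirectionalFlow φ) (hE : OrbitConvex φ E)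
    (hP : P ∈ closure Eᶜ) :
    Disjoint (interiorDirections φ E P) (-interiorDirections φ E P) := by
  rw [disjoint_left]
  rintro w ⟨s, hs, hsE⟩ ⟨t, ht, htE⟩
  rw [smul_neg, ← neg_smul] at htE
  obtain ⟨x, hxE, hxs, hxt⟩ := hφ.exists_mem_of_mem_closure hP hsE htE
  have hx0 := (hφ.ordConnected_setOf_smul_mem hE x w).out hxt hxs
    ⟨neg_nonpos.mpr ht.le, hs.le⟩
  rw [mem_ofPred_eq, zero_smul, hφ.zero] at hx0
  exact hxE hx0

theorem notMem_interior_compl_of_le (hφ : IsDirectionalFlow φ) (hE : OrbitConvex φ E)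
    (hP : P ∈ closure E) {s t : ℝ} (hs : 0 ≤ s) (hst : s ≤ t) (ht : φ P (t • w) ∈ interior E) :
    φ P (s • w) ∉ interior Eᶜ := by
  intro hsE
  obtain ⟨x, hxE, hxs, hxt⟩ := hφ.exists_mem_of_mem_closure hP hsE ht
  have hx0 : φ x ((0 : ℝ) • w) ∈ E := by rwa [zero_smul, hφ.zero]
  exact hxs ((hφ.ordConnected_setOf_smul_mem hE x w).out hx0 hxt ⟨hs, hst⟩)

theorem disjoint_interiorDirections_compl (hφ : IsDirectionalFlow φ) (hE : PreciselyMonotone φ E)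
    (hP : P ∈ frontier E) :
    Disjoint (interiorDirections φ E P) (interiorDirections φ Eᶜ P) := by
  rw [frontier_eq_closure_inter_closure] at hP
  rw [disjoint_left]
  rintro w ⟨s, hs, hsE⟩ ⟨t, ht, htE⟩
  rcases le_total s t with hst | hts
  · exact hφ.notMem_interior_compl_of_le hE.2 hP.2 hs.le hst htE (by rwa [compl_compl])
  · exact hφ.notMem_interior_compl_of_le hE.1 hP.1 ht.le hts hsE htE

theorem disjoint_positiveDirections_neg (hφ : IsDirectionalFlow φ) (hE : PreciselyMonotone φ E)
    (hP : P ∈ frontier E) :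
    Disjoint (positiveDirections φ E P) (-positiveDirections φ E P) := by
  have hcross := hφ.disjoint_interiorDirections_compl hE hP
  have hcross_neg : Disjoint (-interiorDirections φ Eᶜ P) (-interiorDirections φ E P) :=
    hcross.symm.preimage Neg.neg
  rw [frontier_eq_closure_inter_closure] at hP
  have hself := hφ.disjoint_interiorDirections_neg hE.1 hP.2
  have hself_compl := hφ.disjoint_interiorDirections_neg hE.2 (by rw [compl_compl]; exact hP.1)
  rw [positiveDirections, union_neg, neg_neg, disjoint_union_left, disjoint_union_right,
    disjoint_union_right]
  exact ⟨⟨hself, hcross⟩, ⟨hcross_neg, hself_compl.symm⟩⟩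

theorem isOpen_interiorDirections [ContinuousConstSMul ℝ W] (hφ : IsDirectionalFlow φ)
    (E : Set X) (P : X) : IsOpen (interiorDirections φ E P) := by
  simp only [interiorDirections, ofPred_exists, ofPred_and]
  exact isOpen_iUnion fun s => isOpen_const.inter <|
    isOpen_interior.preimage ((hφ.continuous_right P).comp (continuous_const_smul s))

theorem isOpen_positiveDirections [ContinuousNeg W] [ContinuousConstSMul ℝ W]
    (hφ : IsDirectionalFlow φ) (E : Set X) (P : X) : IsOpen (positiveDirections φ E P) :=
  (hφ.isOpen_interiorDirections E P).union (hφ.isOpen_interiorDirections Eᶜ P).neg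

theorem smul_mem_frontier_of_notMem_positiveDirections (hφ : IsDirectionalFlow φ)
    (hP : P ∈ frontier E) (hw : w ∉ positiveDirections φ E P)
    (hw_neg : -w ∉ positiveDirections φ E P) (s : ℝ) : φ P (s • w) ∈ frontier E := by
  by_contra hs
  have hs0 : s ≠ 0 := by
    rintro rfl
    rw [zero_smul, hφ.zero] at hs
    exact hs hP
  rw [← mem_compl_iff, compl_frontier_eq_union_interior] at hs
  rcases hs with hsE | hsE
  · exact (mem_positiveDirections_of_ne_zero hs0 hsE).elim hw hw_neg
  · have hmem := mem_positiveDirections_of_ne_zero hs0 hsE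
    rw [← neg_positiveDirections, mem_neg, mem_neg, neg_neg] at hmem
    exact hmem.elim hw_neg hw

theorem exists_mem_forall_smul_mem_frontier [ContinuousNeg W] [ContinuousConstSMul ℝ W]
    (hφ : IsDirectionalFlow φ) (hE : PreciselyMonotone φ E) (hP : P ∈ frontier E) {S : Set W}
    (hS : IsConnected S) (hSneg : ∀ w ∈ S, -w ∈ S) :
    ∃ w ∈ S, ∀ s : ℝ, φ P (s • w) ∈ frontier E := by
  obtain ⟨w, hwS, hw, hw_neg⟩ := exists_mem_notMem_neg_notMem_of_isConnected hS hSneg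
    (hφ.isOpen_positiveDirections E P) (hφ.disjoint_positiveDirections_neg hE hP)
  exact ⟨w, hwS, hφ.smul_mem_frontier_of_notMem_positiveDirections hP hw hw_neg⟩

end IsDirectionalFlow

theorem line_in_boundary_in_plane_general [TopologicalSpace W] [IsTopologicalAddGroup W]
    [ContinuousSMul ℝ W] (hφ : IsDirectionalFlow φ) (hE : PreciselyMonotone φ E)
    (hP : P ∈ frontier E) {u v : W} (huv : LinearIndependent ℝ ![u, v]) :
    ∃ w : W, w ≠ 0 ∧ w ∈ Submodule.span ℝ ({u, v} : Set W) ∧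
      ∀ s : ℝ, φ P (s • w) ∈ frontier E := by
  have hconn := isConnected_submodule_diff_zero (one_lt_rank_span_pair huv)
  obtain ⟨w, ⟨hw_span, hw_ne⟩, hw⟩ := hφ.exists_mem_forall_smul_mem_frontier hE hP hconn
    fun w hw => ⟨neg_mem hw.1, neg_ne_zero.mpr hw.2⟩
  exact ⟨w, hw_ne, hw_span, hw⟩

end DirectionalFlow

theorem isDirectionalFlow_gmul {m l : ℕ} {Q : ZS m →ₗ[ℝ] ZS m →ₗ[ℝ] TS l} (hQ : Q.IsAlt) :
    IsDirectionalFlow fun (p : ZS m × TS l) (w : ZS m) => gmul Q p (w, 0) where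
  zero p := by simp [gmul]
  add_smul p w a b := by
    simp only [gmul, map_add, map_smul, LinearMap.add_apply, LinearMap.smul_apply,
      hQ.self_eq_zero w]
    ext1 <;> module
  continuous_left w := by
    have hQw : Continuous fun p : ZS m × TS l => Q p.1 w :=
      (Q.flip w).continuous_of_finiteDimensional.comp continuous_fst
    exact (continuous_fst.add continuous_const).prodMk
      ((continuous_snd.add continuous_const).add hQw)
  continuous_right p := by
    have hQp : Continuous (Q p.1) := (Q p.1).continuous_of_finiteDimensional
    unfold gmul
    fun_prop

/-- Through every boundary point of a precisely monotone set and inside every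
two-dimensional horizontal direction there is a horizontal line contained in the
boundary. -/
theorem line_in_boundary_in_plane
    (m l : ℕ) (hm : 0 < m) (hl : 0 < l)
    (Q : ZS m →ₗ[ℝ] ZS m →ₗ[ℝ] TS l)
    (hskew : ∀ z ζ : ZS m, Q z ζ = - Q ζ z)
    (E : Set (ZS m × TS l)) (hE : HConvex Q E ∧ HConvex Q Eᶜ)
    (P : ZS m × TS l) (hP : P ∈ frontier E)
    (u v : ZS m) (huv : LinearIndependent ℝ ![u, v]) :
    ∃ w : ZS m, w ≠ 0 ∧ w ∈ Submodule.span ℝ ({u, v} : Set (ZS m)) ∧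
      ∀ s : ℝ, gmul Q P (s • w, 0) ∈ frontier E :=
  line_in_boundary_in_plane_general (isDirectionalFlow_gmul (isAlt_of_skew hskew)) hE hP huv
end
end
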